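/- arXiv:1505.02748 — 3 statements merged into one kernel-verified Lean document; each statement's English description precedes it below -/
import Mathlib

section
/- If a subshift (X, σ) over a finite alphabet has at least d ≥ 1 distinct nonatomic generic measures, then liminf_{n→∞} P_X(n)/n ≥ d, where P_X(n) is the number of words of length n occurring in X. -/
open MeasureTheory Filter
open scoped ENNReal

/-- The left shift on bi-infinite sequences. -/
def shift {A : Type*} (x : ℤ → A) : ℤ → A := fun n => x (n + 1)

/-- A subshift: a closed, shift-invariant subset of `A^ℤ`. -/
def IsSubshift {A : Type*} [TopologicalSpace A] (X : Set (ℤ → A)) : Prop :=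
  IsClosed X ∧ shift '' X = X

/-- The word complexity `P_X(n)`: the number of words of length `n` occurring in `X`. -/
noncomputable def complexity {A : Type*} (X : Set (ℤ → A)) (n : ℕ) : ℕ :=
  Nat.card {w : Fin n → A // ∃ x ∈ X, ∃ m : ℤ, ∀ t : Fin n, x (m + (t : ℕ)) = w t}

/-- `x` is a generic point for the measure `μ`. -/
def IsGenericPt {A : Type*} [TopologicalSpace A] [MeasurableSpace A]
    (μ : Measure (ℤ → A)) (x : ℤ → A) : Prop :=
  ∀ f : (ℤ → A) → ℝ, Continuous f →
    Tendsto (fun N : ℕ => (∑ n ∈ Finset.range N, f (shift^[n] x)) / (N : ℝ))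
      atTop (nhds (∫ y, f y ∂μ))

/-- A generic measure on the subshift `X`: a Borel probability measure carried by `X`
possessing a generic point in `X`. -/
def GenericMeasureOn {A : Type*} [TopologicalSpace A] [MeasurableSpace A]
    (X : Set (ℤ → A)) (μ : Measure (ℤ → A)) : Prop :=
  IsProbabilityMeasure μ ∧ μ X = 1 ∧ ∃ x ∈ X, IsGenericPt μ x

theorem aux_words {B : Type*} (ξ : ℕ → B) (hper : ∀ a p : ℕ, 1 ≤ p → ∃ t, a ≤ t ∧ ξ (t + p) ≠ ξ t)
    (m n : ℕ) :
    ∃ F : Finset ℕ, n - m ≤ F.card ∧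
      (∀ s ∈ F, ∀ s' ∈ F, (∀ j < n, ξ (s + j) = ξ (s' + j)) → s = s') ∧
      (∀ s ∈ F, ∃ t < n, ∀ j < m, ξ (s + j) = ξ (t + j)) := by
  classical
  by_cases hA : ∃ b, b < n ∧ ∃ a < b, ∀ j < n, ξ (a + j) = ξ (b + j)
  · obtain ⟨hbn, a, hab, hw⟩ := Nat.find_spec hA
    have hbmin := fun c (hc : c < Nat.find hA) => Nat.find_min hA hc
    generalize Nat.find hA = b at *
    obtain ⟨p, rfl⟩ : ∃ p, b = a + p := ⟨b - a, by omega⟩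
    have hp : 1 ≤ p := by omega
    have hE := hper a p hp
    obtain ⟨hau, hu⟩ := Nat.find_spec hE
    have humin := fun c (hc : c < Nat.find hE) => Nat.find_min hE hc
    generalize Nat.find hE = u at *
    have hP : ∀ v, a ≤ v → v < u → ξ (v + p) = ξ v := by
      intro v h1 h2
      by_contra h
      exact humin v h2 ⟨h1, h⟩
    have hun : a + n ≤ u := by
      by_contra h
      apply hu
      have := hw (u - a) (by omega)
      rw [show a + (u - a) = u by omega, show a + p + (u - a) = u + p by omega] at this
      exact this.symm
    have hPk : ∀ k v, a ≤ v → v + k * p < u + p → ξ (v + k * p) = ξ v := by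
      intro k
      induction k with
      | zero => intro v _ _; simp
      | succ k ih =>
        intro v h1 h2
        rw [Nat.succ_mul] at h2 ⊢
        rw [← add_assoc, hP _ (by omega) (by omega)]
        exact ih v h1 (by omega)
    have key : ∀ s s', a ≤ s → s < s' → u + p - n + 1 ≤ s' → s' + max m p ≤ u + p →
        s + (u - s') < u → (∀ j < n, ξ (s + j) = ξ (s' + j)) → False := by
      intro s s' h1 h2 h3 h4 h5 h
      have hpm : p ≤ max m p := le_max_right _ _
      have e1 := h (u + p - s') (by omega)
      have e2 := h (u - s') (by omega)
      rw [show s' + (u + p - s') = u + p by omega,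
        show s + (u + p - s') = s + (u - s') + p by omega, hP _ (by omega) h5, e2,
        show s' + (u - s') = u by omega] at e1
      exact hu e1.symm
    have hmem : ∀ s, s ∈ Finset.Ico a (a + p) ∪ Finset.Ico (u + p - n + 1) (u + p - max m p + 1) →
        (a ≤ s ∧ s < a + p) ∨
          (a + p < s ∧ u + p - n + 1 ≤ s ∧ (n ≤ max m p ∨ s + max m p ≤ u + p)) := by
      intro s hs
      rw [Finset.mem_union, Finset.mem_Ico, Finset.mem_Ico] at hs
      omega
    have hpm : p ≤ max m p := le_max_right _ _
    have hmm : m ≤ max m p := le_max_left _ _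
    by_cases hmn : n ≤ m
    · exact ⟨∅, by simp [hmn], by simp, by simp⟩
    have hmaxn : max m p < n := max_lt (by omega) (by omega)
    refine ⟨Finset.Ico a (a + p) ∪ Finset.Ico (u + p - n + 1) (u + p - max m p + 1), ?_, ?_, ?_⟩
    · rw [Finset.card_union_of_disjoint, Nat.card_Ico, Nat.card_Ico]
      · have : max m p ≤ m + p := max_le (by omega) (by omega)
        omega
      · rw [Finset.disjoint_left]
        intro s h1 h2
        rw [Finset.mem_Ico] at h1 h2
        omega
    · have main : ∀ s s', ((a ≤ s ∧ s < a + p) ∨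
          (a + p < s ∧ u + p - n + 1 ≤ s ∧ (n ≤ max m p ∨ s + max m p ≤ u + p))) →
          ((a ≤ s' ∧ s' < a + p) ∨
          (a + p < s' ∧ u + p - n + 1 ≤ s' ∧ (n ≤ max m p ∨ s' + max m p ≤ u + p))) → s < s' →
          (∀ j < n, ξ (s + j) = ξ (s' + j)) → False := by
        intro s s' hs hs' hlt h
        rcases hs' with hs' | hs'
        · exact hbmin s' hs'.2 ⟨by omega, s, hlt, h⟩
        · exact key s s' (by omega) hlt hs'.2.1 (by omega) (by omega) h
      intro s hs s' hs' h
      rcases lt_trichotomy s s' with hlt | heq | hlt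
      · exact (main s s' (hmem s hs) (hmem s' hs') hlt h).elim
      · exact heq
      · exact (main s' s (hmem s' hs') (hmem s hs) hlt (fun j hj => (h j hj).symm)).elim
    · intro s hs
      rcases hmem s hs with h | h
      · exact ⟨s, by omega, fun _ _ => rfl⟩
      · refine ⟨a + (s - a) % p, ?_, ?_⟩
        · have := Nat.mod_lt (s - a) (show p > 0 by omega)
          omega
        · intro j hj
          have hd := Nat.mod_add_div (s - a) p
          rw [mul_comm] at hd
          have := hPk ((s - a) / p) (a + (s - a) % p + j) (by omega) (by omega)
          rw [← this]
          congr 1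
          omega
  · push Not at hA
    refine ⟨Finset.range n, by simp, ?_, ?_⟩
    · intro s hs s' hs' h
      rw [Finset.mem_range] at hs hs'
      rcases lt_trichotomy s s' with hlt | heq | hlt
      · obtain ⟨j, hj, hne⟩ := hA s' hs' s hlt
        exact (hne (h j hj)).elim
      · exact heq
      · obtain ⟨j, hj, hne⟩ := hA s hs s' hlt
        exact (hne (h j hj).symm).elim
    · intro s hs
      exact ⟨s, Finset.mem_range.1 hs, fun _ _ => rfl⟩

theorem aux_shift {A : Type*} (x : ℤ → A) (n : ℕ) (z : ℤ) : shift^[n] x z = x (z + n) := by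
  induction n generalizing x z with
  | zero => simp
  | succ n ih =>
    rw [Function.iterate_succ_apply, ih]
    simp only [shift]
    congr 1
    push_cast
    ring

theorem aux_bound (S : ℕ → ℝ) (I : ℝ) (h : Tendsto (fun N : ℕ => S N / (N : ℝ)) atTop (nhds I))
    (δ : ℝ) (hδ : 0 < δ) : ∃ C : ℝ, ∀ N : ℕ, |S N - N * I| ≤ δ * N + C := by
  obtain ⟨N0, hN0⟩ := (Metric.tendsto_atTop.1 h) δ hδ
  refine ⟨∑ N ∈ Finset.range (N0 + 1), |S N - N * I|, fun N => ?_⟩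
  have hnn : 0 ≤ ∑ N ∈ Finset.range (N0 + 1), |S N - N * I| :=
    Finset.sum_nonneg fun _ _ => abs_nonneg _
  by_cases hN : N ≤ N0
  · have := Finset.single_le_sum (f := fun N : ℕ => |S N - N * I|) (s := Finset.range (N0 + 1))
      (fun _ _ => abs_nonneg _) (Finset.mem_range.2 (by omega : N < N0 + 1))
    have h2 : 0 ≤ δ * N := by positivity
    linarith
  · have hpos : (0 : ℝ) < N := by
      have : 0 < N := by omega
      exact_mod_cast this
    have := hN0 N (by omega)
    rw [Real.dist_eq, show S N / N - I = (S N - N * I) / N by field_simp, abs_div,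
      abs_of_pos hpos, div_lt_iff₀ hpos] at this
    linarith

theorem aux_ind_cont {A : Type*} [Finite A] [TopologicalSpace A] [DiscreteTopology A]
    (s : Finset ℤ) (S : Set (s → A)) :
    Continuous ((cylinder s S : Set (ℤ → A)).indicator (fun _ => (1 : ℝ))) := by
  apply Continuous.indicator _ continuous_const
  intro a ha
  have hcl : IsClopen (cylinder s S : Set (ℤ → A)) := by
    unfold cylinder
    exact (isClopen_discrete S).preimage (by fun_prop)
  rw [hcl.frontier_eq] at ha
  exact ha.elim

theorem aux_sep {A : Type*} [Fintype A] [TopologicalSpace A] [DiscreteTopology A]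
    [MeasurableSpace A] [BorelSpace A] (μ ν : Measure (ℤ → A)) [IsProbabilityMeasure μ]
    [IsProbabilityMeasure ν] (h : μ ≠ ν) :
    ∃ (g : (ℤ → A) → ℝ) (k : ℕ), Continuous g ∧
      (∀ y z : ℤ → A, (∀ j : ℤ, |j| ≤ k → y j = z j) → g y = g z) ∧
      ∫ y, g y ∂μ ≠ ∫ y, g y ∂ν := by
  by_contra hcon
  push Not at hcon
  apply h
  refine ext_of_generate_finite (measurableCylinders fun _ : ℤ => A)
    generateFrom_measurableCylinders.symm isPiSystem_measurableCylinders ?_ (by simp)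
  intro t ht
  obtain ⟨s, S, hS, rfl⟩ := (mem_measurableCylinders t).1 ht
  have hm : MeasurableSet (cylinder s S : Set (ℤ → A)) := MeasurableSet.of_mem_measurableCylinders ht
  have := hcon ((cylinder s S : Set (ℤ → A)).indicator (fun _ => (1 : ℝ)))
    (∑ j ∈ s, j.natAbs) (aux_ind_cont s S) (by
      intro y z hyz
      have : s.restrict y = s.restrict z := by
        funext j
        apply hyz
        have h1 := Finset.single_le_sum (f := fun j : ℤ => j.natAbs) (s := s)
          (fun _ _ => Nat.zero_le _) j.2
        rw [Int.abs_eq_natAbs]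
        exact_mod_cast h1
      have hiff : y ∈ (cylinder s S : Set (ℤ → A)) ↔ z ∈ (cylinder s S : Set (ℤ → A)) := by
        rw [mem_cylinder, mem_cylinder, this]
      by_cases hz : z ∈ (cylinder s S : Set (ℤ → A))
      · rw [Set.indicator_of_mem hz, Set.indicator_of_mem (hiff.2 hz)]
      · rw [Set.indicator_of_notMem hz, Set.indicator_of_notMem (fun h => hz (hiff.1 h))])
  rw [integral_indicator_const _ hm, integral_indicator_const _ hm] at this
  simp only [smul_eq_mul, mul_one] at this
  exact (measureReal_eq_measureReal_iff).1 this

theorem aux_nonper {A : Type*} [Fintype A] [TopologicalSpace A] [DiscreteTopology A]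
    [MeasurableSpace A] [BorelSpace A] (μ : Measure (ℤ → A)) [IsProbabilityMeasure μ]
    (x : ℤ → A) (hx : IsGenericPt μ x) (hna : ∀ y, μ {y} = 0) (a p : ℕ) (hp : 1 ≤ p) :
    ∃ t : ℕ, a ≤ t ∧ x ((t + p : ℕ) : ℤ) ≠ x (t : ℤ) := by
  classical
  by_contra hcon
  push Not at hcon
  have hk : ∀ k t : ℕ, a ≤ t → x ((t + k * p : ℕ) : ℤ) = x (t : ℤ) := by
    intro k
    induction k with
    | zero => intro t _; simp
    | succ k ih =>
      intro t ht
      rw [Nat.succ_mul, ← add_assoc, hcon _ (by omega), ih t ht]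
  have hp' : (0 : ℤ) < p := by exact_mod_cast hp
  set y : ℤ → A := fun z => x (a * p + z % p) with hy
  have hxy : ∀ (q : ℕ) (z : ℤ), a + z.natAbs ≤ q → x (z + (q * p : ℕ)) = y z := by
    intro q z hq
    have h0 := Int.emod_nonneg z hp'.ne'
    have h1 := Int.emod_add_mul_ediv z p
    have h2 : 0 ≤ (q : ℤ) - a + z / p := by
      have : -(z.natAbs : ℤ) ≤ z / p := by
        rw [Int.le_ediv_iff_mul_le hp']
        have : (z.natAbs : ℤ) ≤ z.natAbs * p := by nlinarith [Int.natCast_nonneg z.natAbs]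
        have := neg_abs_le z
        rw [Int.abs_eq_natAbs] at this
        linarith
      omega
    obtain ⟨r, hr⟩ := Int.eq_ofNat_of_zero_le h2
    obtain ⟨e, he⟩ := Int.eq_ofNat_of_zero_le h0
    have := hk r (a * p + e) (by nlinarith)
    simp only [hy, he]
    rw [he] at h1
    convert this using 2
    · push_cast
      rw [← hr, ← h1]
      have : ((e : ℤ) + p * (z / p)) / p = z / p := by rw [h1]
      rw [this]
      ring
    · push_cast
      rfl
  set c : ℝ := 1 / (2 * p) with hc
  have hcpos : 0 < c := by positivity
  have hcyl : ∀ s : Finset ℤ, c ≤ μ.real (cylinder s {s.restrict y}) := by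
    intro s
    have hm : MeasurableSet (cylinder s {s.restrict y} : Set (ℤ → A)) :=
      MeasurableSet.cylinder s (measurableSet_singleton _)
    have ht := hx _ (aux_ind_cont s {s.restrict y})
    rw [integral_indicator_const _ hm] at ht
    simp only [smul_eq_mul, mul_one] at ht
    set f := ((cylinder s {s.restrict y} : Set (ℤ → A)).indicator (fun _ => (1 : ℝ))) with hf
    set K : ℕ := a + ∑ j ∈ s, j.natAbs with hK
    have hge : ∀ q : ℕ, K ≤ q → f (shift^[q * p] x) = 1 := by
      intro q hq
      rw [hf, Set.indicator_of_mem]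
      rw [mem_cylinder, Set.mem_singleton_iff]
      funext j
      simp only [Finset.restrict]
      rw [aux_shift]
      apply hxy
      have h1 := Finset.single_le_sum (f := fun j : ℤ => j.natAbs) (s := s)
          (fun _ _ => Nat.zero_le _) j.2
      omega
    have hnn : ∀ z, 0 ≤ f z := fun z => Set.indicator_nonneg (fun _ _ => zero_le_one) z
    have hsum : ∀ Q : ℕ, (Q : ℝ) - K ≤ ∑ n ∈ Finset.range (Q * p), f (shift^[n] x) := by
      intro Q
      have himg : (Finset.Ico K Q).image (fun q => q * p) ⊆ Finset.range (Q * p) := by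
        intro n hn
        obtain ⟨q, hq, rfl⟩ := Finset.mem_image.1 hn
        rw [Finset.mem_Ico] at hq
        rw [Finset.mem_range]
        exact Nat.mul_lt_mul_of_pos_right hq.2 hp
      refine le_trans ?_ (Finset.sum_le_sum_of_subset_of_nonneg himg (fun _ _ _ => hnn _))
      rw [Finset.sum_image (by
        intro q _ q' _ h
        exact Nat.eq_of_mul_eq_mul_right hp h)]
      rw [Finset.sum_congr rfl (fun q hq => hge q (Finset.mem_Ico.1 hq).1)]
      simp only [Finset.sum_const, Nat.card_Ico, nsmul_eq_mul, mul_one]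
      have : Q ≤ (Q - K) + K := by omega
      have : (Q : ℝ) ≤ ((Q - K : ℕ) : ℝ) + K := by exact_mod_cast this
      linarith
    have htp : Tendsto (fun Q : ℕ => Q * p) atTop atTop :=
      tendsto_id.atTop_mul_const' hp
    refine ge_of_tendsto (ht.comp htp) ?_
    filter_upwards [eventually_ge_atTop (2 * K + 1)] with Q hQ
    simp only [Function.comp]
    have hQ' : (2 : ℝ) * K + 1 ≤ Q := by exact_mod_cast hQ
    have hpR : (0 : ℝ) < p := by exact_mod_cast hp
    have hK0 : (0 : ℝ) ≤ K := Nat.cast_nonneg _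
    have hpos : (0 : ℝ) < ((Q * p : ℕ) : ℝ) := by
      push_cast
      apply mul_pos _ hpR
      linarith
    rw [le_div_iff₀ hpos]
    refine le_trans ?_ (hsum Q)
    rw [hc]
    push_cast
    field_simp
    linarith
  have hint : ({y} : Set (ℤ → A)) = ⋂ k : ℕ, cylinder (α := fun _ : ℤ => A) (Finset.Icc (-(k : ℤ)) k)
      {(Finset.Icc (-(k : ℤ)) k).restrict y} := by
    ext z
    simp only [Set.mem_singleton_iff, Set.mem_iInter, mem_cylinder]
    constructor
    · rintro rfl k
      rfl
    · intro h
      funext j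
      have := congrFun (h j.natAbs) ⟨j, by rw [Finset.mem_Icc]; omega⟩
      exact this
  have htend := tendsto_measure_iInter_atTop (μ := μ)
    (s := fun k : ℕ => (cylinder (α := fun _ : ℤ => A) (Finset.Icc (-(k : ℤ)) k)
      {(Finset.Icc (-(k : ℤ)) k).restrict y} : Set (ℤ → A)))
    (fun k => (MeasurableSet.cylinder _ (measurableSet_singleton _)).nullMeasurableSet)
    (by
      intro k l hkl z hz
      have hz' : (Finset.Icc (-(l : ℤ)) l).restrict z = (Finset.Icc (-(l : ℤ)) l).restrict y := hz
      change (Finset.Icc (-(k : ℤ)) k).restrict z = (Finset.Icc (-(k : ℤ)) k).restrict y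
      funext j
      have hj := Finset.mem_Icc.1 j.2
      have := congrFun hz' ⟨j.1, by rw [Finset.mem_Icc]; omega⟩
      exact this)
    ⟨0, measure_ne_top _ _⟩
  rw [← hint, hna y] at htend
  have hle : ENNReal.ofReal c ≤ 0 := by
    refine ge_of_tendsto' htend (fun k => ?_)
    exact ENNReal.ofReal_le_of_le_toReal (hcyl _)
  have := ENNReal.ofReal_eq_zero.1 (le_antisymm hle (by simp))
  linarith

theorem aux_disj {A : Type*} [TopologicalSpace A] [MeasurableSpace A]
    (μ ν : Measure (ℤ → A)) (x y : ℤ → A) (hx : IsGenericPt μ x) (hy : IsGenericPt ν y)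
    (g : (ℤ → A) → ℝ) (k : ℕ) (hg : Continuous g)
    (hk : ∀ y z : ℤ → A, (∀ j : ℤ, |j| ≤ k → y j = z j) → g y = g z)
    (hne : ∫ y, g y ∂μ ≠ ∫ y, g y ∂ν) (ε : ℝ) (hε : 0 < ε) :
    ∃ N0 : ℕ, ∀ n m : ℕ, N0 ≤ n → ε * n ≤ m → m ≤ n → ∀ t < n, ∀ t' < n,
      (∀ j < m, x ((t + j : ℕ) : ℤ) = y ((t' + j : ℕ) : ℤ)) → False := by
  set I := ∫ y, g y ∂μ
  set J := ∫ y, g y ∂ν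
  have hD : 0 < |I - J| := abs_pos.2 (sub_ne_zero.2 hne)
  set D := |I - J| with hDdef
  have hδ : 0 < ε * D / 16 := by positivity
  obtain ⟨C, hC⟩ := aux_bound _ _ (hx g hg) _ hδ
  obtain ⟨C', hC'⟩ := aux_bound _ _ (hy g hg) _ hδ
  obtain ⟨N1, hN1⟩ := exists_nat_gt (2 * (2 * k * D + 2 * C + 2 * C') / (ε * D))
  obtain ⟨N2, hN2⟩ := exists_nat_gt (2 * k / ε)
  refine ⟨max N1 N2, fun n m hn hm hmn t ht t' ht' h => ?_⟩
  have hn1 : (N1 : ℝ) ≤ n := by exact_mod_cast (le_max_left _ _).trans hn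
  have hn2 : (N2 : ℝ) ≤ n := by exact_mod_cast (le_max_right _ _).trans hn
  have hb1 : 2 * (2 * k * D + 2 * C + 2 * C') < n * (ε * D) :=
    (div_lt_iff₀ (by positivity)).1 (hN1.trans_le hn1)
  have hb2 : 2 * (k : ℝ) < m := by
    have := (div_lt_iff₀ hε).1 (hN2.trans_le hn2)
    linarith
  have hkm : 2 * k < m := by exact_mod_cast hb2
  have hS : ∑ i ∈ Finset.Ico (t + k) (t + (m - k)), g (shift^[i] x) =
      ∑ i ∈ Finset.Ico (t' + k) (t' + (m - k)), g (shift^[i] y) := by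
    rw [add_comm t k, add_comm t (m - k), add_comm t' k, add_comm t' (m - k),
      ← Finset.sum_Ico_add, ← Finset.sum_Ico_add]
    refine Finset.sum_congr rfl fun i hi => hk _ _ fun j hj => ?_
    rw [Finset.mem_Ico] at hi
    rw [aux_shift, aux_shift]
    rw [abs_le] at hj
    have := h (i + j).toNat (by omega)
    convert this using 2 <;> omega
  rw [Finset.sum_Ico_eq_sub _ (by omega), Finset.sum_Ico_eq_sub _ (by omega)] at hS
  have b1 := abs_le.1 (hC (t + (m - k)))
  have b2 := abs_le.1 (hC (t + k))
  have b3 := abs_le.1 (hC' (t' + (m - k)))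
  have b4 := abs_le.1 (hC' (t' + k))
  have htR : (t : ℝ) ≤ n := by exact_mod_cast ht.le
  have htR' : (t' : ℝ) ≤ n := by exact_mod_cast ht'.le
  have hmR : (m : ℝ) ≤ n := by exact_mod_cast hmn
  push_cast [Nat.cast_sub (show k ≤ m by omega)] at b1 b2 b3 b4
  set δ := ε * D / 16 with hδd
  have hsumδ : δ * (t + (m - k)) + δ * (t + k) + δ * (t' + (m - k)) + δ * (t' + k)
      ≤ δ * (6 * n) := by
    rw [← mul_add, ← mul_add, ← mul_add]
    apply mul_le_mul_of_nonneg_left _ hδ.le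
    linarith
  have hmain : |((m : ℝ) - 2 * k) * (I - J)| ≤ δ * (6 * n) + 2 * C + 2 * C' := by
    rw [abs_le]
    constructor <;> linarith
  rw [abs_mul, abs_of_pos (by linarith), ← hDdef] at hmain
  have h6 : ε * n * D ≤ m * D := mul_le_mul_of_nonneg_right hm hD.le
  have h7 : δ * (6 * n) = 3 / 8 * (n * (ε * D)) := by rw [hδd]; ring
  have h8 : 0 ≤ n * (ε * D) := by positivity
  linarith

theorem aux_count {A : Type*} [Fintype A] [TopologicalSpace A] [DiscreteTopology A]
    [MeasurableSpace A] [BorelSpace A]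
    (X : Set (ℤ → A)) (d : ℕ)
    (μ : Fin d → Measure (ℤ → A)) (hinj : Function.Injective μ)
    (hgen : ∀ i, GenericMeasureOn X (μ i))
    (hna : ∀ i y, μ i {y} = 0) (ε : ℝ) (hε : 0 < ε) :
    ∃ N0 : ℕ, ∀ n m : ℕ, N0 ≤ n → ε * n ≤ m → m ≤ n → d * (n - m) ≤ complexity X n := by
  classical
  choose hpr hX1 x hxX hx using hgen
  have hN : ∀ i j : Fin d, ∃ N0 : ℕ, i ≠ j → ∀ n m : ℕ, N0 ≤ n → ε * n ≤ m → m ≤ n →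
      ∀ t < n, ∀ t' < n,
      (∀ l < m, x i ((t + l : ℕ) : ℤ) = x j ((t' + l : ℕ) : ℤ)) → False := by
    intro i j
    by_cases hij : i = j
    · exact ⟨0, fun h => (h hij).elim⟩
    · have := hpr i
      have := hpr j
      obtain ⟨g, k, hg, hk, hne⟩ := aux_sep (μ i) (μ j) (fun h => hij (hinj h))
      obtain ⟨N0, h⟩ := aux_disj (μ i) (μ j) (x i) (x j) (hx i) (hx j) g k hg hk hne ε hε
      exact ⟨N0, fun _ => h⟩
  choose N hN using hN
  refine ⟨∑ i, ∑ j, N i j, fun n m hn hm hmn => ?_⟩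
  have hNn : ∀ i j, N i j ≤ n := fun i j =>
    ((Finset.single_le_sum (f := fun j => N i j) (fun _ _ => Nat.zero_le _)
      (Finset.mem_univ j)).trans (Finset.single_le_sum (f := fun i => ∑ j, N i j)
        (fun _ _ => Nat.zero_le _) (Finset.mem_univ i))).trans hn
  have hF := fun i => aux_words (fun t : ℕ => x i (t : ℤ))
    (fun a p hp => by
      have := hpr i
      exact aux_nonper (μ i) (x i) (hx i) (hna i) a p hp) m n
  choose F hcard hFinj hpre using hF
  let φ : (Σ i, F i) → {w : Fin n → A // ∃ x ∈ X, ∃ m : ℤ, ∀ t : Fin n, x (m + (t : ℕ)) = w t} :=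
    fun q => ⟨fun t => x q.1 (((q.2 : ℕ) + (t : ℕ) : ℕ) : ℤ), x q.1, hxX q.1, ((q.2 : ℕ) : ℤ),
      fun t => by push_cast; rfl⟩
  have hφ : Function.Injective φ := by
    rintro ⟨i, s, hs⟩ ⟨j, s', hs'⟩ h
    have h1 : ∀ l < n, x i ((s + l : ℕ) : ℤ) = x j ((s' + l : ℕ) : ℤ) := by
      intro l hl
      exact congrFun (congrArg Subtype.val h) ⟨l, hl⟩
    by_cases hij : i = j
    · subst hij
      have := hFinj i s hs s' hs' h1
      subst this
      rfl
    · obtain ⟨t, ht, htl⟩ := hpre i s hs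
      obtain ⟨t', ht', htl'⟩ := hpre j s' hs'
      refine (hN i j hij n m (hNn i j) hm hmn t ht t' ht' ?_).elim
      intro l hl
      exact (htl l hl).symm.trans ((h1 l (by omega)).trans (htl' l hl))
  have hc := Nat.card_le_card_of_injective φ hφ
  unfold complexity
  refine le_trans ?_ hc
  rw [Nat.card_eq_fintype_card, Fintype.card_sigma]
  simp only [Fintype.card_coe]
  calc d * (n - m) = ∑ _i : Fin d, (n - m) := by simp
    _ ≤ _ := Finset.sum_le_sum fun i _ => hcard i

/-- If a subshift has at least `d ≥ 1` distinct nonatomic generic measures, then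
`liminf P_X(n)/n ≥ d`. -/
theorem liminf_complexity_ge_card_generic_measures
    {A : Type*} [Fintype A] [TopologicalSpace A] [DiscreteTopology A]
    [MeasurableSpace A] [BorelSpace A]
    (X : Set (ℤ → A)) (hX : IsSubshift X) (d : ℕ) (hd : 1 ≤ d)
    (μ : Fin d → Measure (ℤ → A)) (hinj : Function.Injective μ)
    (hgen : ∀ i, GenericMeasureOn X (μ i))
    (hna : ∀ i y, μ i {y} = 0) :
    (d : ℝ≥0∞) ≤ liminf (fun n : ℕ => (complexity X n : ℝ≥0∞) / (n : ℝ≥0∞)) atTop := by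
  have key : ∀ ε : ℝ, 0 < ε → ε < 1 → ENNReal.ofReal (d * (1 - 2 * ε)) ≤
      liminf (fun n : ℕ => (complexity X n : ℝ≥0∞) / (n : ℝ≥0∞)) atTop := by
    intro ε hε hε1
    obtain ⟨N0, h⟩ := aux_count X d μ hinj hgen hna ε hε
    obtain ⟨N1, hN1⟩ := exists_nat_gt (1 / ε)
    refine le_liminf_of_le (by isBoundedDefault) ?_
    filter_upwards [eventually_ge_atTop N0, eventually_ge_atTop N1, eventually_gt_atTop 0]
      with n h0 h1 hn
    have hnR : (0 : ℝ) < n := by exact_mod_cast hn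
    have h1R : (N1 : ℝ) ≤ n := by exact_mod_cast h1
    have h1' : 1 < n * ε := (div_lt_iff₀ hε).1 (hN1.trans_le h1R)
    have hmn : ⌈ε * n⌉₊ ≤ n := Nat.ceil_le.2 (by nlinarith)
    have hc := h n ⌈ε * n⌉₊ h0 (Nat.le_ceil _) hmn
    have hlt := Nat.ceil_lt_add_one (show 0 ≤ ε * n by positivity)
    have hcR : (d : ℝ) * (n - (⌈ε * n⌉₊ : ℝ)) ≤ complexity X n := by
      rw [← Nat.cast_sub hmn]
      exact_mod_cast hc
    rw [ENNReal.le_div_iff_mul_le (by left; exact_mod_cast hn.ne') (by left; simp),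
      ← ENNReal.ofReal_natCast n, ← ENNReal.ofReal_natCast (complexity X n),
      ← ENNReal.ofReal_mul' hnR.le]
    apply ENNReal.ofReal_le_ofReal
    refine le_trans ?_ hcR
    rw [mul_assoc]
    apply mul_le_mul_of_nonneg_left _ (Nat.cast_nonneg d)
    linarith
  have ht : Tendsto (fun ε : ℝ => ENNReal.ofReal (d * (1 - 2 * ε))) (nhdsWithin 0 (Set.Ioi 0))
      (nhds (d : ℝ≥0∞)) := by
    have : Tendsto (fun ε : ℝ => ENNReal.ofReal (d * (1 - 2 * ε))) (nhds 0)
        (nhds (ENNReal.ofReal (d * (1 - 2 * 0)))) := by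
      apply Continuous.tendsto
      exact ENNReal.continuous_ofReal.comp (by fun_prop)
    simp only [mul_zero, sub_zero, mul_one, ENNReal.ofReal_natCast] at this
    exact this.mono_left nhdsWithin_le_nhds
  refine le_of_tendsto ht ?_
  filter_upwards [Ioo_mem_nhdsGT (show (0 : ℝ) < 1 by norm_num)] with ε hε
  exact key ε hε.1 hε.2
end

section
/- If a subshift (X, σ) satisfies liminf_{n→∞} P_X(n)/n < k for some natural number k, then (X, σ) has at most k−1 distinct nonatomic generic measures. -/
open MeasureTheory Filter
open scoped ENNReal

theorem shift_iter {A : Type*} (x : ℤ → A) (n : ℕ) (i : ℤ) : (shift^[n] x) i = x (n + i) := by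
  induction n generalizing i with
  | zero => simp
  | succ n ih =>
    rw [Function.iterate_succ_apply']
    simp only [shift, ih]; congr 1; push_cast; ring

theorem words_lemma {A : Type*} (x : ℕ → A)
    (hx : ∀ a p : ℕ, 0 < p → ∃ e, a ≤ e ∧ x e ≠ x (e + p)) (n m : ℕ) (hmn : m ≤ n) :
    ∃ T : Finset ℕ, n - m ≤ T.card ∧
      (∀ s ∈ T, ∀ s' ∈ T, (∀ t < n, x (s + t) = x (s' + t)) → s = s') ∧
      ∀ s ∈ T, ∃ r < n, ∀ t < m, x (s + t) = x (r + t) := by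
  classical
  by_cases hinj : ∀ b < n, ∀ a < b, ¬ ∀ t < n, x (a + t) = x (b + t)
  · refine ⟨Finset.range n, by simp, ?_, ?_⟩
    · intro s hs s' hs' h
      simp only [Finset.mem_range] at hs hs'
      rcases lt_trichotomy s s' with h1 | h1 | h1
      · exact absurd h (hinj s' hs' s h1)
      · exact h1
      · exact absurd (fun t ht => (h t ht).symm) (hinj s hs s' h1)
    · intro s hs
      exact ⟨s, by simpa using hs, fun _ _ => rfl⟩
  · have hex : ∃ b, b < n ∧ ∃ a < b, ∀ t < n, x (a + t) = x (b + t) := by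
      push Not at hinj
      obtain ⟨b, hb, a, ha, h⟩ := hinj
      exact ⟨b, hb, a, ha, h⟩
    obtain ⟨hbn, a, hab, heq⟩ := Nat.find_spec hex
    have hmin : ∀ b' < Nat.find hex, ∀ a' < b', ¬ ∀ t < n, x (a' + t) = x (b' + t) := by
      intro b' hb' a' ha' h
      exact Nat.find_min hex hb' ⟨by omega, a', ha', h⟩
    generalize Nat.find hex = b at *
    obtain ⟨p, rfl⟩ : ∃ p, b = a + p := ⟨b - a, by omega⟩
    have hp : 0 < p := by omega
    have hex2 := hx a p hp
    obtain ⟨hae, hne⟩ := Nat.find_spec hex2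
    have hper : ∀ t, a ≤ t → t < Nat.find hex2 → x t = x (t + p) := by
      intro t h1 h2
      have := Nat.find_min hex2 h2
      by_contra h3
      exact this ⟨h1, h3⟩
    generalize Nat.find hex2 = e at *
    have hen : a + n ≤ e := by
      by_contra h
      apply hne
      have := heq (e - a) (by omega)
      rwa [show a + (e - a) = e by omega, show a + p + (e - a) = e + p by omega] at this
    have hinit : ∀ s, a ≤ s → s + m ≤ e + p → ∃ r < n, ∀ t < m, x (s + t) = x (r + t) := by
      intro s
      induction s using Nat.strong_induction_on with
      | _ s ih =>
        intro h1 h2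
        by_cases h3 : s < a + p
        · exact ⟨s, by omega, fun _ _ => rfl⟩
        · obtain ⟨r, hr, h⟩ := ih (s - p) (by omega) (by omega) (by omega)
          refine ⟨r, hr, fun t ht => ?_⟩
          rw [← h t ht, hper (s - p + t) (by omega) (by omega)]
          congr 1; omega
    refine ⟨Finset.Ico a (a + p) ∪ Finset.Ico (e + p - n + 1) (e + p - max p m + 1), ?_, ?_, ?_⟩
    · rw [Finset.card_union_of_disjoint]
      · simp only [Nat.card_Ico]; omega
      · rw [Finset.disjoint_left]
        intro s h1 h2
        simp only [Finset.mem_Ico] at h1 h2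
        omega
    · have key : ∀ s ∈ Finset.Ico a (a + p) ∪ Finset.Ico (e + p - n + 1) (e + p - max p m + 1),
          ∀ s' ∈ Finset.Ico a (a + p) ∪ Finset.Ico (e + p - n + 1) (e + p - max p m + 1), s < s' →
          ¬ (∀ t < n, x (s + t) = x (s' + t)) := by
        intro s hs s' hs' hlt h
        simp only [Finset.mem_union, Finset.mem_Ico] at hs hs'
        rcases hs' with hs' | hs'
        · exact hmin s' (by omega) s hlt h
        · apply hne
          have h1 := h (e + p - s') (by omega)
          have h2 := h (e - s') (by omega)
          rw [show s' + (e + p - s') = e + p by omega] at h1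
          rw [show s' + (e - s') = e by omega] at h2
          rw [← h1, ← h2, hper (s + (e - s')) (by omega) (by omega)]
          congr 1; omega
      intro s hs s' hs' h
      rcases lt_trichotomy s s' with h1 | h1 | h1
      · exact absurd h (key s hs s' hs' h1)
      · exact h1
      · exact absurd (fun t ht => (h t ht).symm) (key s' hs' s hs h1)
    · intro s hs
      simp only [Finset.mem_union, Finset.mem_Ico] at hs
      rcases hs with hs | hs
      · exact ⟨s, by omega, fun _ _ => rfl⟩
      · exact hinit s (by omega) (by omega)

theorem avg_clopen {A : Type*} [Fintype A] [TopologicalSpace A] [DiscreteTopology A]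
    [MeasurableSpace A] [BorelSpace A] (μ : Measure (ℤ → A)) [IsProbabilityMeasure μ]
    (x : ℤ → A) (hx : IsGenericPt μ x) (C : Set (ℤ → A)) (hC : IsClopen C) :
    Tendsto (fun N : ℕ => (∑ n ∈ Finset.range N, C.indicator (fun _ => (1:ℝ)) (shift^[n] x)) / (N : ℝ))
      atTop (nhds (μ.real C)) := by
  have h := hx (C.indicator fun _ => (1:ℝ)) (hC.continuous_indicator continuous_const)
  have h2 : ∫ y, C.indicator (fun _ => (1:ℝ)) y ∂μ = μ.real C := by
    have := integral_indicator_one (μ := μ) hC.isOpen.measurableSet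
    exact this
  rwa [h2] at h

theorem clopen_cyl {A : Type*} [TopologicalSpace A] [DiscreteTopology A]
    (L : ℕ) (z : ℤ → A) : IsClopen {y : ℤ → A | ∀ i ∈ Finset.Icc (-(L:ℤ)) L, y i = z i} := by
  have : {y : ℤ → A | ∀ i ∈ Finset.Icc (-(L:ℤ)) L, y i = z i}
      = ⋂ i ∈ Finset.Icc (-(L:ℤ)) L, (fun y : ℤ → A => y i) ⁻¹' {z i} := by
    ext y; simp
  rw [this]
  apply isClopen_biInter_finset
  intro i _
  exact (isClopen_discrete _).preimage (continuous_apply i)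

theorem not_ev_periodic {A : Type*} [Fintype A] [TopologicalSpace A] [DiscreteTopology A]
    [MeasurableSpace A] [BorelSpace A] (μ : Measure (ℤ → A)) [IsProbabilityMeasure μ]
    (hat : ∀ y, μ {y} = 0)
    (x : ℤ → A) (hx : IsGenericPt μ x) (a p : ℕ) (hp : 0 < p) :
    ∃ e : ℕ, a ≤ e ∧ x e ≠ x ((e + p : ℕ) : ℤ) := by
  by_contra hcon
  push Not at hcon
  set z : ℤ → A := fun t => x (a + (t - a) % p) with hz
  have hp' : (0:ℤ) < p := by exact_mod_cast hp
  have hxz : ∀ u : ℕ, x (((a + u : ℕ) : ℤ)) = z ((a + u : ℕ) : ℤ) := by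
    intro u
    induction u using Nat.strong_induction_on with
    | _ u ih =>
      by_cases hu : u < p
      · simp only [hz]
        congr 1
        push_cast
        rw [add_sub_cancel_left, Int.emod_eq_of_lt (by positivity) (by exact_mod_cast hu)]
      · have h1 := ih (u - p) (by omega)
        have h2 := hcon (a + (u - p)) (by omega)
        rw [show a + (u - p) + p = a + u by omega] at h2
        rw [← h2, h1]
        simp only [hz]
        congr 2
        rw [show (((a + u : ℕ) : ℤ) - a) = ((a + (u - p) : ℕ) : ℤ) - a + p by
          push_cast [Nat.cast_sub (Nat.le_of_not_lt hu)]; ring]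
        simp
  let C : ℕ → ℕ → Set (ℤ → A) := fun j L =>
    {y : ℤ → A | ∀ i ∈ Finset.Icc (-(L:ℤ)) L, y i = z (j + i)}
  have hCc : ∀ j L, IsClopen (C j L) := fun j L => clopen_cyl L (fun i => z (j + i))
  have hU : ∀ L, μ (⋃ j ∈ Finset.range p, C j L) = 1 := by
    intro L
    have hcl : IsClopen (⋃ j ∈ Finset.range p, C j L) :=
      isClopen_biUnion_finset (fun j _ => hCc j L)
    have h1 := avg_clopen μ x hx _ hcl
    have h2 : Tendsto (fun n : ℕ => (⋃ j ∈ Finset.range p, C j L).indicator (fun _ => (1:ℝ))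
        (shift^[n] x)) atTop (nhds 1) := by
      apply tendsto_const_nhds.congr'
      filter_upwards [eventually_ge_atTop (a + L)] with n hn
      rw [Set.indicator_of_mem]
      simp only [Set.mem_iUnion, Finset.mem_range]
      refine ⟨n % p, Nat.mod_lt _ hp, ?_⟩
      intro i hi
      rw [Finset.mem_Icc] at hi
      rw [shift_iter]
      obtain ⟨u, hu⟩ : ∃ u : ℕ, (n + i : ℤ) = ((a + u : ℕ) : ℤ) :=
        ⟨(n + i - a).toNat, by omega⟩
      rw [hu, hxz u, ← hu]
      simp only [hz]
      congr 2
      push_cast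
      rw [show ((n:ℤ) % p + i - a) = (n:ℤ) % p + (i - a) by ring, Int.emod_add_emod]
      congr 1; ring
    have h3 := h2.cesaro
    have h4 : μ.real (⋃ j ∈ Finset.range p, C j L) = 1 := by
      refine tendsto_nhds_unique h1 (h3.congr fun n => ?_)
      rw [div_eq_inv_mul]
    have h5 := ENNReal.ofReal_toReal (measure_ne_top μ (⋃ j ∈ Finset.range p, C j L))
    rw [← h5]
    change ENNReal.ofReal (μ.real _) = 1
    rw [h4]; simp
  have hlim : ∀ j, Tendsto (fun L => μ (C j L)) atTop (nhds 0) := by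
    intro j
    have h1 := tendsto_measure_iInter_atTop (μ := μ) (s := C j)
      (fun L => (hCc j L).isOpen.measurableSet.nullMeasurableSet)
      (by
        intro L L' hLL y hy i hi
        apply hy i
        rw [Finset.mem_Icc] at hi ⊢
        constructor <;> omega) ⟨0, measure_ne_top _ _⟩
    have h2 : (⋂ L, C j L) = {fun i => z (j + i)} := by
      ext y
      simp only [Set.mem_iInter, Set.mem_singleton_iff]
      constructor
      · intro h
        funext i
        apply h i.natAbs i
        rw [Finset.mem_Icc]; constructor <;> omega
      · rintro rfl L i _
        rfl
    rw [h2, hat] at h1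
    exact h1
  have hsum : Tendsto (fun L => ∑ j ∈ Finset.range p, μ (C j L)) atTop (nhds 0) := by
    have := tendsto_finsetSum (Finset.range p) (fun j _ => hlim j)
    simpa using this
  have hle : ∀ L, (1 : ℝ≥0∞) ≤ ∑ j ∈ Finset.range p, μ (C j L) := fun L => by
    rw [← hU L]
    exact measure_biUnion_finset_le _ _
  have := ge_of_tendsto' hsum hle
  simp at this

theorem separation {A : Type*} [Fintype A] [TopologicalSpace A] [DiscreteTopology A]
    [MeasurableSpace A] [BorelSpace A] (μ ν : Measure (ℤ → A)) [IsProbabilityMeasure μ]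
    [IsProbabilityMeasure ν] (hne : μ ≠ ν)
    (x y : ℤ → A) (hx : IsGenericPt μ x) (hy : IsGenericPt ν y) (ε : ℝ) (hε : 0 < ε) :
    ∀ᶠ n : ℕ in atTop, ∀ m : ℕ, ε * n ≤ m → m ≤ n → ∀ s < n, ∀ s' < n,
      ¬ ∀ t < m, x ((s + t : ℕ) : ℤ) = y ((s' + t : ℕ) : ℤ) := by
  obtain ⟨I, S, hIS⟩ : ∃ (I : Finset ℤ) (S : Set (I → A)), μ (cylinder I S) ≠ ν (cylinder I S) := by
    by_contra hcon
    push Not at hcon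
    apply hne
    refine ext_of_generate_finite (measurableCylinders fun _ : ℤ => A)
      generateFrom_measurableCylinders.symm isPiSystem_measurableCylinders ?_ (by simp)
    intro s hs
    obtain ⟨I, S, -, rfl⟩ := (mem_measurableCylinders _).1 hs
    exact hcon I S
  set C : Set (ℤ → A) := cylinder I S with hCdef
  have hC : IsClopen C := by
    have : IsClopen S := isClopen_discrete S
    exact this.preimage (by fun_prop)
  obtain ⟨R, hR⟩ : ∃ R : ℕ, ∀ i ∈ I, i.natAbs ≤ R := ⟨I.sup Int.natAbs, fun i hi => Finset.le_sup (f := Int.natAbs) hi⟩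
  have hloc : ∀ u v : ℤ → A, (∀ i : ℤ, i.natAbs ≤ R → u i = v i) →
      C.indicator (fun _ => (1:ℝ)) u = C.indicator (fun _ => (1:ℝ)) v := by
    intro u v h
    have : u ∈ C ↔ v ∈ C := by
      simp only [hCdef, mem_cylinder]
      have : I.restrict u = I.restrict v := by
        funext i; exact h i (hR i i.2)
      rw [this]
    by_cases h1 : u ∈ C
    · rw [Set.indicator_of_mem h1, Set.indicator_of_mem (this.1 h1)]
    · rw [Set.indicator_of_notMem h1, Set.indicator_of_notMem (fun h => h1 (this.2 h))]
  have hD : 0 < |μ.real C - ν.real C| := by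
    rw [abs_pos, sub_ne_zero]
    intro h
    exact hIS ((measureReal_eq_measureReal_iff).1 h)
  set D := |μ.real C - ν.real C| with hDdef
  have hbd : ∀ u, 0 ≤ C.indicator (fun _ => (1:ℝ)) u ∧ C.indicator (fun _ => (1:ℝ)) u ≤ 1 := by
    intro u
    by_cases h1 : u ∈ C <;> simp [h1]
  have hgen : ∀ (g : ℕ → ℝ) (c : ℝ), 
      Tendsto (fun N : ℕ => (∑ n ∈ Finset.range N, g n) / (N : ℝ)) atTop (nhds c) → ∀ δ > 0,
      ∃ K : ℝ, ∀ N : ℕ, |∑ n ∈ Finset.range N, g n - N * c| ≤ δ * N + K := by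
    intro g c hg δ hδ
    have h1 := Metric.tendsto_atTop.1 hg δ hδ
    obtain ⟨N0, h1⟩ := h1
    refine ⟨∑ N ∈ Finset.range (N0 + 1), |∑ n ∈ Finset.range N, g n - N * c|, fun N => ?_⟩
    by_cases hN : N < N0 + 1
    · have := Finset.single_le_sum (f := fun N : ℕ => |∑ n ∈ Finset.range N, g n - N * c|)
        (fun i _ => abs_nonneg _) (Finset.mem_range.2 hN)
      have h0 : 0 ≤ δ * N := by positivity
      linarith
    · have h2 := h1 N (by omega)
      have hNpos : (0:ℝ) < N := by
        have : 0 < N := by omega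
        exact_mod_cast this
      rw [Real.dist_eq] at h2
      have h3 : ∑ n ∈ Finset.range N, g n - N * c = ((∑ n ∈ Finset.range N, g n) / N - c) * N := by
        field_simp
      rw [h3, abs_mul, abs_of_pos hNpos]
      have h4 : 0 ≤ ∑ N ∈ Finset.range (N0 + 1), |∑ n ∈ Finset.range N, g n - N * c| :=
        Finset.sum_nonneg fun _ _ => abs_nonneg _
      nlinarith
  set g : ℕ → ℝ := fun n => C.indicator (fun _ => (1:ℝ)) (shift^[n] x) with hg
  set h : ℕ → ℝ := fun n => C.indicator (fun _ => (1:ℝ)) (shift^[n] y) with hh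
  have hδ : 0 < ε * D / 16 := by positivity
  obtain ⟨K1, hK1⟩ := hgen g _ (avg_clopen μ x hx C hC) _ hδ
  obtain ⟨K2, hK2⟩ := hgen h _ (avg_clopen ν y hy C hC) _ hδ
  have hlarge : ∀ᶠ n : ℕ in atTop, 2 * K1 + 2 * K2 + 2 * R < (ε * D / 2) * n := by
    have : Tendsto (fun n : ℕ => (ε * D / 2) * (n:ℝ)) atTop atTop :=
      tendsto_natCast_atTop_atTop.const_mul_atTop (by positivity)
    exact this.eventually_gt_atTop _
  filter_upwards [hlarge] with n hn m hm1 hm2 s hs s' hs' heq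
  -- sums
  have hwin : ∀ (f : ℕ → ℝ) (s : ℕ), ∑ t ∈ Finset.range (s + m), f t - ∑ t ∈ Finset.range s, f t
      = ∑ t ∈ Finset.range m, f (s + t) := by
    intro f s
    rw [Finset.sum_range_add]; ring
  have hdiff : |∑ t ∈ Finset.range m, g (s + t) - ∑ t ∈ Finset.range m, h (s' + t)| ≤ 2 * R := by
    rw [← Finset.sum_sub_distrib]
    refine (Finset.abs_sum_le_sum_abs _ _).trans ?_
    have hterm : ∀ t ∈ Finset.range m, |g (s + t) - h (s' + t)| ≤
        if t ∈ Finset.range R ∪ Finset.Ico (m - R) m then (1:ℝ) else 0 := by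
      intro t ht
      rw [Finset.mem_range] at ht
      split_ifs with hc
      · have h1 := hbd (shift^[s + t] x)
        have h2 := hbd (shift^[s' + t] y)
        rw [abs_le]
        simp only [hg, hh]
        constructor <;> linarith
      · simp only [Finset.mem_union, Finset.mem_range, Finset.mem_Ico] at hc
        have : g (s + t) = h (s' + t) := by
          apply hloc
          intro i hi
          rw [shift_iter, shift_iter]
          have := heq (t + i).toNat (by omega)
          convert this using 2 <;> push_cast <;> omega
        rw [this]; simp
    refine (Finset.sum_le_sum hterm).trans ?_
    rw [Finset.sum_ite_mem, Finset.sum_const, nsmul_eq_mul, mul_one]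
    have : (Finset.range m ∩ (Finset.range R ∪ Finset.Ico (m - R) m)).card ≤ 2 * R := by
      refine (Finset.card_le_card Finset.inter_subset_right).trans ?_
      refine (Finset.card_union_le _ _).trans ?_
      simp only [Finset.card_range, Nat.card_Ico]; omega
    exact_mod_cast this
  rw [← hwin g s, ← hwin h s'] at hdiff
  have a1 := hK1 (s + m)
  have a2 := hK1 s
  have a3 := hK2 (s' + m)
  have a4 := hK2 s'
  have hsn : (s:ℝ) ≤ n := by exact_mod_cast hs.le
  have hsn' : (s':ℝ) ≤ n := by exact_mod_cast hs'.le
  have hmn : (m:ℝ) ≤ n := by exact_mod_cast hm2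
  have hmD : (m:ℝ) * D ≤ (ε * D / 16) * (2 * s + 2 * s' + 2 * m) + 2 * K1 + 2 * K2 + 2 * R := by
    rw [hDdef, ← Nat.abs_cast m, ← abs_mul, ← hDdef, Nat.abs_cast]
    push_cast at a1 a3
    rw [abs_le] at *
    constructor <;> linarith [a1.1, a1.2]
  have : (ε * D / 16) * (2 * s + 2 * s' + 2 * m) ≤ (ε * D / 16) * (6 * n) := by
    apply mul_le_mul_of_nonneg_left _ hδ.le
    linarith
  have h7 : ε * n * D ≤ m * D := mul_le_mul_of_nonneg_right hm1 hD.le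
  have h8 : 0 ≤ ε * D * n := by positivity
  nlinarith

theorem final_count {A : Type*} [Fintype A] [TopologicalSpace A] [DiscreteTopology A]
    [MeasurableSpace A] [BorelSpace A]
    (X : Set (ℤ → A)) (k : ℕ)
    (hcomp : liminf (fun n : ℕ => (complexity X n : ℝ≥0∞) / (n : ℝ≥0∞)) atTop < (k : ℝ≥0∞)) :
    ¬ ∃ μ : Fin k → Measure (ℤ → A), Function.Injective μ ∧
        ∀ i, (∀ y, μ i {y} = 0) ∧ GenericMeasureOn X (μ i) := by
  classical
  rintro ⟨μ, hinj, hμ⟩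
  choose hat hprob hX1 x hxX hgen using hμ
  have hk : 0 < k := by
    rcases Nat.eq_zero_or_pos k with rfl | h
    · simp at hcomp
    · exact h
  have hkR : (0:ℝ) < k := by exact_mod_cast hk
  obtain ⟨c, hc1, hc2⟩ := exists_between hcomp
  have hctop : c ≠ ⊤ := ne_top_of_lt hc2
  have hfreq := frequently_lt_of_liminf_lt (by isBoundedDefault) hc1
  have hcr : c.toReal < k := by
    have := (ENNReal.toReal_lt_toReal hctop (ENNReal.natCast_ne_top k)).2 hc2
    simpa using this
  have hc0 : 0 ≤ c.toReal := ENNReal.toReal_nonneg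
  set r := c.toReal with hr
  set ε : ℝ := (k - r) / (2 * k) with hεdef
  have hε : 0 < ε := div_pos (by linarith) (by linarith)
  have hε1 : ε ≤ 1 := by
    rw [hεdef, div_le_one (by linarith)]; linarith
  have hkε : k * ε = (k - r) / 2 := by rw [hεdef]; field_simp
  have hsep : ∀ᶠ n : ℕ in atTop, ∀ i j, i ≠ j → ∀ m : ℕ, ε * n ≤ m → m ≤ n → ∀ s < n, ∀ s' < n,
      ¬ ∀ t < m, x i ((s + t : ℕ) : ℤ) = x j ((s' + t : ℕ) : ℤ) := by
    rw [eventually_all]; intro i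
    rw [eventually_all]; intro j
    by_cases hij : i = j
    · simp [hij]
    · filter_upwards [separation (μ i) (μ j) (fun h => hij (hinj h)) (x i) (x j) (hgen i) (hgen j)
        ε hε] with n hn _
      exact hn
  have hlarge : ∀ᶠ n : ℕ in atTop, (k:ℝ) < ((k - r) / 2) * n := by
    have : Tendsto (fun n : ℕ => ((k - r) / 2) * (n:ℝ)) atTop atTop :=
      tendsto_natCast_atTop_atTop.const_mul_atTop (by linarith)
    exact this.eventually_gt_atTop _
  obtain ⟨n, hPn, hs, hl, hn0⟩ :=
    (hfreq.and_eventually (hsep.and (hlarge.and (eventually_gt_atTop 0)))).exists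
  set m := ⌈ε * n⌉₊ with hm
  have hnR : (0:ℝ) < n := by exact_mod_cast hn0
  have hm1 : ε * n ≤ m := Nat.le_ceil _
  have hmn : m ≤ n := Nat.ceil_le.2 (by nlinarith)
  have hm3 : (m:ℝ) < ε * n + 1 := Nat.ceil_lt_add_one (by positivity)
  have hT : ∀ i, _ := fun i => words_lemma (fun t : ℕ => x i (t : ℤ))
    (fun a p hp => not_ev_periodic (μ i) (hat i) (x i) (hgen i) a p hp) n m hmn
  choose T hTcard hTinj hTpre using hT
  -- injection from the sigma
  let W := {w : Fin n → A // ∃ x ∈ X, ∃ m : ℤ, ∀ t : Fin n, x (m + (t : ℕ)) = w t}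
  let F : (Σ i : Fin k, T i) → W := fun q =>
    ⟨fun t => x q.1 ((q.2.1 + t.1 : ℕ) : ℤ), x q.1, hxX q.1, (q.2.1 : ℤ), fun t => by push_cast; rfl⟩
  have hF : Function.Injective F := by
    rintro ⟨i, s, hs1⟩ ⟨j, s', hs1'⟩ h
    have hw : ∀ t < n, x i ((s + t : ℕ) : ℤ) = x j ((s' + t : ℕ) : ℤ) := by
      intro t ht
      exact congrFun (congrArg Subtype.val h) ⟨t, ht⟩
    by_cases hij : i = j
    · subst hij
      have := hTinj i s hs1 s' hs1' hw
      subst this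
      rfl
    · exfalso
      obtain ⟨a, ha, ha'⟩ := hTpre i s hs1
      obtain ⟨b, hb, hb'⟩ := hTpre j s' hs1'
      refine hs i j hij m hm1 hmn a ha b hb fun t ht => ?_
      rw [← ha' t ht, ← hb' t ht]
      exact hw t (by omega)
  have hcard : k * (n - m) ≤ complexity X n := by
    have h1 : Nat.card (Σ i : Fin k, T i) ≤ Nat.card W := Nat.card_le_card_of_injective F hF
    have h2 : Nat.card (Σ i : Fin k, T i) = ∑ i, (T i).card := by
      simp [Nat.card_eq_fintype_card]
    have h3 : k * (n - m) ≤ ∑ i, (T i).card := by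
      have := Finset.sum_le_sum (s := Finset.univ) (fun i _ => hTcard i)
      simpa using this
    exact h3.trans (h2 ▸ h1)
  have hP : (complexity X n : ℝ) < r * n := by
    have h1 : (complexity X n : ℝ≥0∞) < c * n :=
      (ENNReal.div_lt_iff (Or.inl (by exact_mod_cast hn0.ne')) (Or.inl (ENNReal.natCast_ne_top n))).1 hPn
    have h2 := (ENNReal.toReal_lt_toReal (ENNReal.natCast_ne_top _)
      (ENNReal.mul_ne_top hctop (ENNReal.natCast_ne_top n))).2 h1
    simpa using h2
  have hcardR : (k:ℝ) * (n - m) ≤ complexity X n := by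
    have : ((k * (n - m) : ℕ) : ℝ) ≤ complexity X n := by exact_mod_cast hcard
    rwa [Nat.cast_mul, Nat.cast_sub hmn] at this
  have h9 : (k:ℝ) * m ≤ k * (ε * n + 1) := mul_le_mul_of_nonneg_left hm3.le hkR.le
  have h10 : (k:ℝ) * (ε * n + 1) = (k - r) / 2 * n + k := by rw [← hkε]; ring
  nlinarith

/-- If `liminf P_X(n)/n < k`, then the subshift has at most `k-1` distinct nonatomic
generic measures (i.e. there is no family of `k` distinct ones). -/
theorem at_most_k_sub_one_generic_measures
    {A : Type*} [Fintype A] [TopologicalSpace A] [DiscreteTopology A]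
    [MeasurableSpace A] [BorelSpace A]
    (X : Set (ℤ → A)) (hX : IsSubshift X) (k : ℕ)
    (hcomp : liminf (fun n : ℕ => (complexity X n : ℝ≥0∞) / (n : ℝ≥0∞)) atTop < (k : ℝ≥0∞)) :
    ¬ ∃ μ : Fin k → Measure (ℤ → A), Function.Injective μ ∧
        ∀ i, (∀ y, μ i {y} = 0) ∧ GenericMeasureOn X (μ i) := by
  exact final_count X k hcomp
end

section
/- For k > 2, a minimal k-interval exchange transformation has at most k−2 distinct generic measures. -/
open MeasureTheory Filter

/-- `T` is a `k`-interval exchange transformation of `[0, lam)` with separation points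
`sep 0 = 0 < sep 1 < … < sep k = lam`: it is a bijection of `[0, lam)` which is a
translation on each subinterval `[sep i, sep (i+1))`. -/
structure IsIET (k : ℕ) (lam : ℝ) (sep : Fin (k + 1) → ℝ) (T : ℝ → ℝ) : Prop where
  sep_zero : sep 0 = 0
  sep_last : sep (Fin.last k) = lam
  sep_mono : StrictMono sep
  bijOn : Set.BijOn T (Set.Ico 0 lam) (Set.Ico 0 lam)
  translation : ∀ i : Fin k, ∃ c : ℝ,
    ∀ x ∈ Set.Ico (sep i.castSucc) (sep i.succ), T x = x + c

/-- Minimality of an IET: every forward orbit is dense in `[0, lam)`. -/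
def IETMinimal (lam : ℝ) (T : ℝ → ℝ) : Prop :=
  ∀ x ∈ Set.Ico (0 : ℝ) lam,
    Set.Ico (0 : ℝ) lam ⊆ closure {y | ∃ n : ℕ, T^[n] x = y}

/-- The word complexity of the natural symbolic coding of the IET: the number of words
`w` of length `n` over `{0, …, k-1}` that occur as the coding of the first `n` iterates
of some point. -/
noncomputable def ietComplexity (k : ℕ) (lam : ℝ) (sep : Fin (k + 1) → ℝ)
    (T : ℝ → ℝ) (n : ℕ) : ℕ :=
  Nat.card {w : Fin n → Fin k // ∃ x ∈ Set.Ico (0 : ℝ) lam,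
    ∀ t : Fin n, T^[(t : ℕ)] x ∈ Set.Ico (sep (w t).castSucc) (sep (w t).succ)}

/-- A generic measure for the IET `T` of `[0, lam)`: a Borel probability measure carried
by `[0, lam)` possessing a generic point. -/
def IETGenericMeasure (lam : ℝ) (T : ℝ → ℝ) (μ : Measure ℝ) : Prop :=
  IsProbabilityMeasure μ ∧ μ (Set.Ico 0 lam) = 1 ∧
  ∃ x ∈ Set.Ico (0 : ℝ) lam, ∀ f : ℝ → ℝ, Continuous f →
    Tendsto (fun N : ℕ => (∑ n ∈ Finset.range N, f (T^[n] x)) / (N : ℝ))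
      atTop (nhds (∫ y, f y ∂μ))

namespace IETAux

/-- the abstract system: a permutation of `[0,lam)` which is a translation between cuts -/
structure Sys (lam : ℝ) (S : Type) where
  T : Equiv.Perm (Set.Ico (0:ℝ) lam)
  b : S → Set.Ico (0:ℝ) lam
  tr : ∀ x y, (∀ s, b s ≤ x ↔ b s ≤ y) → ((T y : ℝ) - T x = y - x)
  mn : ∀ x u v : Set.Ico (0:ℝ) lam, u < v → ∃ n : ℕ, u < (T ^ n) x ∧ (T ^ n) x < v

variable {lam : ℝ} {S : Type} (A : Sys lam S)

def rel (n : ℕ) (x y : Set.Ico (0:ℝ) lam) : Prop :=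
  ∀ t < n, ∀ s, A.b s ≤ (A.T ^ t) x ↔ A.b s ≤ (A.T ^ t) y

def Y (s : S) (n : ℕ) : Set.Ico (0:ℝ) lam := (A.T⁻¹ ^ n) (A.b s)

variable {A}

lemma rel_refl (n x) : rel A n x x := fun _ _ _ => Iff.rfl

lemma rel.symm {n x y} (h : rel A n x y) : rel A n y x := fun t ht s => (h t ht s).symm

lemma rel.trans {n x y z} (h : rel A n x y) (h' : rel A n y z) : rel A n x z :=
  fun t ht s => (h t ht s).trans (h' t ht s)

lemma rel.mono {n m x y} (h : rel A n x y) (hm : m ≤ n) : rel A m x y :=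
  fun t ht s => h t (by omega) s

lemma rel.step {n x y} (h : rel A (n+1) x y) : rel A n (A.T x) (A.T y) := by
  intro t ht s
  have := h (t+1) (by omega) s
  simpa [pow_succ] using this

lemma rel_succ_of {n x y} (h0 : ∀ s, A.b s ≤ x ↔ A.b s ≤ y) (h : rel A n (A.T x) (A.T y)) :
    rel A (n+1) x y := by
  intro t ht s
  rcases t with _ | t
  · simpa using h0 s
  · have := h t (by omega) s
    simpa [pow_succ] using this

lemma Tpow_Y (s : S) (n r : ℕ) : (A.T ^ r) (Y A s (n + r)) = Y A s n := by
  unfold Y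
  rw [add_comm, pow_add, ← Equiv.Perm.mul_apply, ← mul_assoc, inv_pow, mul_inv_cancel, one_mul]

lemma T_Y (s : S) (n : ℕ) : A.T (Y A s (n + 1)) = Y A s n := by
  simpa using Tpow_Y (A := A) s n 1

lemma Y_of_pow {s : S} {n : ℕ} {z} (h : (A.T ^ n) z = A.b s) : z = Y A s n := by
  unfold Y
  rw [← h, ← Equiv.Perm.mul_apply, inv_pow, inv_mul_cancel]; rfl

lemma rel.shift {n x y} (h : rel A n x y) :
    ∀ t ≤ n, (((A.T ^ t) y : Set.Ico (0:ℝ) lam) : ℝ) - (A.T ^ t) x = y - x := by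
  intro t
  induction t with
  | zero => intro _; simp
  | succ t ih =>
    intro ht
    rw [← ih (by omega), pow_succ', Equiv.Perm.mul_apply, Equiv.Perm.mul_apply]
    exact A.tr _ _ (h t (by omega))

lemma rel.conv {n x y z} (h : rel A n x y) (hxz : x ≤ z) (hzy : z ≤ y) : rel A n x z := by
  induction n with
  | zero => intro t ht; omega
  | succ n ih =>
    have h1 := ih (h.mono (by omega))
    intro t ht s
    rcases Nat.lt_succ_iff_lt_or_eq.1 ht with h2 | rfl
    · exact h1 t h2 s
    · have e1 := h1.shift t le_rfl
      have e2 := (h.mono (Nat.le_succ t)).shift t le_rfl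
      have a1 : (A.T ^ t) x ≤ (A.T ^ t) z := by
        rw [← Subtype.coe_le_coe] at *; linarith
      have a2 : (A.T ^ t) z ≤ (A.T ^ t) y := by
        rw [← Subtype.coe_le_coe] at *; linarith
      exact ⟨fun q => q.trans a1, fun q => (h t ht s).2 (q.trans a2)⟩

lemma cut {n x y} (h : rel A n x y) (hn : ¬ rel A (n+1) x y) (hxy : x ≤ y) :
    ∃ s, x < Y A s n ∧ Y A s n ≤ y ∧ rel A n x (Y A s n) := by
  have hs : ∃ s, ¬ (A.b s ≤ (A.T ^ n) x ↔ A.b s ≤ (A.T ^ n) y) := by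
    by_contra hc
    push Not at hc
    apply hn
    intro t ht s
    rcases Nat.lt_succ_iff_lt_or_eq.1 ht with h2 | rfl
    · exact h t h2 s
    · exact hc s
  obtain ⟨s, hs⟩ := hs
  have e := h.shift n le_rfl
  have a1 : (A.T ^ n) x ≤ (A.T ^ n) y := by
    rw [← Subtype.coe_le_coe] at *; linarith
  have h1 : (A.T ^ n) x < A.b s := by
    by_contra hc
    push Not at hc
    exact hs ⟨fun q => q.trans a1, fun _ => hc⟩
  have h2 : A.b s ≤ (A.T ^ n) y := by
    by_contra hc
    exact hs ⟨fun q => absurd q (not_le.2 h1), fun q => absurd q hc⟩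
  have h1' : (((A.T ^ n) x : Set.Ico (0:ℝ) lam) : ℝ) < A.b s := h1
  have h2' : (A.b s : ℝ) ≤ ((A.T ^ n) y : Set.Ico (0:ℝ) lam) := h2
  let z : Set.Ico (0:ℝ) lam := ⟨x + (A.b s - (A.T ^ n) x), by
    have := x.2.1; have := y.2.2
    constructor <;> linarith⟩
  have hxz : x < z := by
    rw [← Subtype.coe_lt_coe]; simp only [z]; linarith
  have hzy : z ≤ y := by
    rw [← Subtype.coe_le_coe]; simp only [z]; linarith
  have hr := h.conv hxz.le hzy
  have hz : z = Y A s n := by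
    apply Y_of_pow
    have := hr.shift n le_rfl
    apply Subtype.ext
    have hz' : (z:ℝ) = x + (A.b s - (A.T ^ n) x) := rfl
    linarith
  exact ⟨s, hz ▸ hxz, hz ▸ hzy, hz ▸ hr⟩

lemma cut_lt {n x y} (hn : ¬ rel A n x y) (hxy : x ≤ y) :
    ∃ j < n, ∃ s, x < Y A s j ∧ Y A s j ≤ y := by
  induction n with
  | zero => exact absurd (fun t ht => by omega) hn
  | succ n ih =>
    by_cases h : rel A n x y
    · obtain ⟨s, h1, h2, _⟩ := cut h hn hxy
      exact ⟨n, by omega, s, h1, h2⟩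
    · obtain ⟨j, hj, q⟩ := ih h
      exact ⟨j, by omega, q⟩

lemma rel_succ_of_not_special {n x y} (hx : ∀ s, ¬ rel A n x (Y A s n)) (h : rel A n x y) :
    rel A (n+1) x y := by
  by_contra hc
  rcases le_total x y with hxy | hxy
  · obtain ⟨s, _, _, h3⟩ := cut h hc hxy
    exact hx s h3
  · obtain ⟨s, _, _, h3⟩ := cut h.symm (fun q => hc q.symm) hxy
    exact hx s (h.trans h3)

open Classical in
lemma pigeon [Fintype S] (n : ℕ) (x : Set.Ico (0:ℝ) lam) :
    ∃ r q, 0 < q ∧ r + q ≤ n * Fintype.card S + 1 ∧ rel A n ((A.T ^ r) x) ((A.T ^ (r+q)) x) := by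
  let cs : Set.Ico (0:ℝ) lam → Finset (ℕ × S) := fun z =>
    (Finset.range n ×ˢ Finset.univ).filter (fun p => Y A p.2 p.1 ≤ z)
  have key : ∀ z w, z ≤ w → (cs z).card = (cs w).card → rel A n z w := by
    intro z w hzw hc
    by_contra hn
    obtain ⟨j, hj, s, h1, h2⟩ := cut_lt hn hzw
    have : (cs z).card < (cs w).card := by
      apply Finset.card_lt_card
      rw [Finset.ssubset_iff_of_subset]
      · refine ⟨(j, s), ?_, ?_⟩
        · simp [cs, hj, h2]
        · simp [cs, h1]
      · intro p hp
        simp only [cs, Finset.mem_filter] at hp ⊢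
        exact ⟨hp.1, hp.2.trans hzw⟩
    omega
  have hb : ∀ z, (cs z).card ≤ n * Fintype.card S := by
    intro z
    refine (Finset.card_filter_le _ _).trans ?_
    simp
  obtain ⟨i, hi, j, hj, hne, he⟩ := Finset.exists_ne_map_eq_of_card_lt_of_maps_to
    (s := Finset.range (n * Fintype.card S + 2)) (t := Finset.range (n * Fintype.card S + 1))
    (f := fun r => (cs ((A.T ^ r) x)).card) (by simp) (by
      intro r _
      have := hb ((A.T ^ r) x)
      simp only [Finset.coe_range, Set.mem_Iio]; omega)
  have key' : rel A n ((A.T ^ i) x) ((A.T ^ j) x) := by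
    rcases le_total ((A.T ^ i) x) ((A.T ^ j) x) with h | h
    · exact key _ _ h he
    · exact (key _ _ h he.symm).symm
  simp only [Finset.mem_range] at hi hj
  rcases lt_or_gt_of_ne hne with h | h
  · exact ⟨i, j - i, by omega, by omega, by rwa [show i + (j - i) = j by omega]⟩
  · exact ⟨j, i - j, by omega, by omega, by rw [show j + (i - j) = i by omega]; exact key'.symm⟩

lemma arith {g : ℕ → ℝ} {q : ℕ} (hb : ∀ n, 0 ≤ g n ∧ g n < lam)
    (h : ∀ n, g (n + 1 + q) - g (n + 1) = g (n + q) - g n) : g q = g 0 := by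
  have h1 : ∀ n, g (n + q) - g n = g q - g 0 := by
    intro n
    induction n with
    | zero => simp
    | succ n ih => rw [h, ih]
  have h2 : ∀ m : ℕ, g (m * q) = g 0 + m * (g q - g 0) := by
    intro m
    induction m with
    | zero => simp
    | succ m ih =>
      have := h1 (m * q)
      rw [Nat.succ_mul]; push_cast; linarith
  by_contra hne
  have hne : g q - g 0 ≠ 0 := sub_ne_zero.2 hne
  obtain ⟨m, hm⟩ := exists_nat_gt (lam / |g q - g 0|)
  have hp := abs_pos.2 hne
  rw [div_lt_iff₀ hp] at hm
  have : |(m:ℝ) * (g q - g 0)| < lam := by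
    have e := h2 m
    have := hb (m * q); have := hb 0
    rw [abs_lt]; constructor <;> linarith
  rw [abs_mul, Nat.abs_cast] at this
  linarith

lemma not_periodic {x : Set.Ico (0:ℝ) lam} {q : ℕ} (hq : 0 < q) (h : (A.T ^ q) x = x) : False := by
  have hfin : (Set.range (fun n : ℕ => (A.T ^ n) x)).Finite := by
    apply (Set.finite_range (fun n : Fin q => (A.T ^ (n:ℕ)) x)).subset
    rintro _ ⟨n, rfl⟩
    refine ⟨⟨n % q, Nat.mod_lt _ hq⟩, ?_⟩
    have hm : ∀ m : ℕ, ((A.T ^ q) ^ m) x = x := by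
      intro m
      induction m with
      | zero => simp
      | succ m ih => rw [pow_succ, Equiv.Perm.mul_apply, h, ih]
    have : A.T ^ n = A.T ^ (n % q) * (A.T ^ q) ^ (n / q) := by
      rw [← pow_mul, ← pow_add, Nat.mod_add_div]
    simp only
    rw [this, Equiv.Perm.mul_apply, hm]
  have hlam : (0:ℝ) < lam := lt_of_le_of_lt x.2.1 x.2.2
  have hinf : Set.Infinite (Set.univ : Set (Set.Ico (0:ℝ) lam)) := by
    have : Infinite (Set.Ico (0:ℝ) lam) := (Set.Ico_infinite hlam).to_subtype
    exact Set.infinite_univ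
  -- choose a gap to the right of the largest element
  obtain ⟨w, hw, hmax⟩ := Set.exists_max_image _ id hfin ⟨_, ⟨0, rfl⟩⟩
  let v : Set.Ico (0:ℝ) lam := ⟨((w:ℝ) + lam) / 2, by
    have := w.2.1; have := w.2.2; constructor <;> linarith⟩
  have hwv : w < v := by
    rw [← Subtype.coe_lt_coe]; have := w.2.2; simp only [v]; linarith
  obtain ⟨n, h1, _⟩ := A.mn x w v hwv
  exact absurd h1 (not_lt.2 (hmax _ ⟨n, rfl⟩))

lemma T_pow (j : ℕ) (z : Set.Ico (0:ℝ) lam) : A.T ((A.T ^ j) z) = (A.T ^ (j+1)) z := by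
  rw [pow_succ', Equiv.Perm.mul_apply]

lemma exists_special [Fintype S] (n : ℕ) (x : Set.Ico (0:ℝ) lam) :
    ∃ r ≤ n * Fintype.card S + 1, ∃ s, rel A n ((A.T ^ r) x) (Y A s n) := by
  by_contra hc
  push Not at hc
  obtain ⟨r, q, hq, hrq, hrel⟩ := pigeon (A := A) n x
  set z := (A.T ^ r) x with hz
  have hp : ∀ j, (A.T ^ j) z = (A.T ^ (r + j)) x := by
    intro j; rw [hz, ← Equiv.Perm.mul_apply, ← pow_add, add_comm]
  have main : ∀ j, rel A n ((A.T ^ j) z) ((A.T ^ (j+q)) z) ∧ ∀ s, ¬ rel A n ((A.T ^ j) z) (Y A s n) := by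
    intro j
    induction j using Nat.strong_induction_on with
    | _ j ih =>
    constructor
    · rcases j with _ | j
      · rw [hp, hp]; simpa using hrel
      · obtain ⟨h1, h2⟩ := ih j (by omega)
        have := (rel_succ_of_not_special h2 h1).step
        rwa [T_pow, T_pow,
          show j + q + 1 = j + 1 + q by omega] at this
    · by_cases hj : j < q
      · intro s
        rw [hp]
        exact hc _ (by omega) s
      · obtain ⟨h1, h2⟩ := ih (j - q) (by omega)
        rw [show j - q + q = j by omega] at h1
        intro s h
        exact h2 s (h1.trans h)
  have hfix : (A.T ^ q) z = z := by
    apply Subtype.ext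
    have := arith (lam := lam) (g := fun n => (((A.T ^ n) z : Set.Ico (0:ℝ) lam) : ℝ)) (q := q)
      (fun n => ((A.T ^ n) z).2) (by
        intro j
        obtain ⟨h1, h2⟩ := main j
        have h3 := (rel_succ_of_not_special h2 h1).shift 1 (by omega)
        rw [pow_one, T_pow, T_pow,
          show j + q + 1 = j + 1 + q by omega] at h3
        exact h3)
    simpa using this
  exact not_periodic hq hfix

/-- right neighbourhoods -/
lemma right_nhd [Fintype S] (n : ℕ) (x : Set.Ico (0:ℝ) lam) : ∃ v, x < v ∧ ∀ z, x ≤ z → z < v → rel A n x z := by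
  let F : Finset (Set.Ico (0:ℝ) lam) := by
    classical exact ((Finset.range n ×ˢ Finset.univ).image (fun p : ℕ × S => Y A p.2 p.1)).filter (x < ·)
  let v0 : Set.Ico (0:ℝ) lam := ⟨((x:ℝ) + lam) / 2, by
    have := x.2.1; have := x.2.2; constructor <;> linarith⟩
  have hv0 : x < v0 := by
    rw [← Subtype.coe_lt_coe]; have := x.2.2; simp only [v0]; linarith
  classical
  obtain ⟨v, hv, hmin⟩ := Finset.exists_min_image (insert v0 F) id ⟨v0, by simp⟩
  refine ⟨v, ?_, ?_⟩
  · rcases Finset.mem_insert.1 hv with rfl | h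
    · exact hv0
    · simp [F] at h; exact h.2
  · intro z hz hzv
    by_contra hn
    obtain ⟨j, hj, s, h1, h2⟩ := cut_lt hn hz
    have : Y A s j ∈ insert v0 F := by
      apply Finset.mem_insert_of_mem
      simp only [F, Finset.mem_filter, Finset.mem_image]
      exact ⟨⟨(j, s), by simp [hj], rfl⟩, h1⟩
    exact absurd (h2.trans_lt hzv) (not_lt.2 (hmin _ this))

lemma par {n m : ℕ} {u v : Set.Ico (0:ℝ) lam} (h : rel A (n+1) u v)
    (hns : ∀ j, 0 < j → j < m → ∀ t, ¬ rel A n ((A.T ^ j) u) (Y A t n)) :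
    ∀ j, 0 < j → j ≤ m → rel A n ((A.T ^ j) u) ((A.T ^ j) v) := by
  intro j
  induction j with
  | zero => intro h; omega
  | succ j ih =>
    intro _ hj
    rcases Nat.eq_zero_or_pos j with rfl | hj0
    · simpa using h.step
    · have := (rel_succ_of_not_special (hns j hj0 (by omega)) (ih hj0 (by omega))).step
      rwa [T_pow, T_pow] at this

lemma separated {n : ℕ} {s : S} (h0 : ∀ t, rel A n (Y A s n) (Y A t n) → s = t)
    {p q : Set.Ico (0:ℝ) lam} (hp : rel A n p (Y A s n)) (hq : rel A n q (Y A s n))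
    (hpq : ¬ rel A (n+1) p q) :
    (p < Y A s n ∧ Y A s n ≤ q) ∨ (q < Y A s n ∧ Y A s n ≤ p) := by
  rcases le_total p q with h | h
  · obtain ⟨t, h1, h2, h3⟩ := cut (hp.trans hq.symm) hpq h
    obtain rfl := h0 t (hp.symm.trans h3)
    exact Or.inl ⟨h1, h2⟩
  · obtain ⟨t, h1, h2, h3⟩ := cut (hq.trans hp.symm) (fun h => hpq h.symm) h
    obtain rfl := h0 t (hq.symm.trans h3)
    exact Or.inr ⟨h1, h2⟩

lemma no_trap [Fintype S] {n : ℕ} {s t : S} (hst : ¬ rel A n (Y A s n) (Y A t n))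
    (h : ∀ z, rel A n z (Y A s n) → ∃ q, 0 < q ∧ rel A n ((A.T ^ q) z) (Y A s n) ∧
      ∀ j, 0 < j → j < q → ¬ rel A n ((A.T ^ j) z) (Y A t n)) : False := by
  have main : ∀ m z, rel A n z (Y A s n) → ¬ rel A n ((A.T ^ m) z) (Y A t n) := by
    intro m
    induction m using Nat.strong_induction_on with
    | _ m ih =>
    intro z hz
    rcases Nat.eq_zero_or_pos m with rfl | hm
    · intro h'
      exact hst (hz.symm.trans (by simpa using h'))
    · obtain ⟨q, hq, h1, h2⟩ := h z hz
      by_cases hmq : m < q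
      · exact h2 m hm hmq
      · have := ih (m - q) (by omega) _ h1
        rwa [← Equiv.Perm.mul_apply, ← pow_add, show m - q + q = m by omega] at this
  obtain ⟨v, hv, hz⟩ := right_nhd (A := A) n (Y A t n)
  obtain ⟨m, h1, h2⟩ := A.mn (Y A s n) _ v hv
  exact main m _ (rel_refl _ _) (hz _ h1.le h2).symm

lemma core [Fintype S] [Nontrivial S] (N : ℕ)
    (hD : ∀ n ≥ N, ∀ s t r, r ≤ (2 * Fintype.card S + 4) * n →
      rel A n (Y A s (n + r)) (Y A t n) → s = t) : False := by
  obtain ⟨s, t0, hst⟩ := exists_pair_ne S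
  set K := Fintype.card S with hK
  have ret : ∀ n ≥ N, ∀ m, m + n * K + 2 ≤ (2 * K + 4) * n →
      ∃ l, m < l ∧ l ≤ m + n * K + 2 ∧ rel A n (Y A s (n + l)) (Y A s n) := by
    intro n hn m hm
    obtain ⟨r, hr, t, hrt⟩ := exists_special (A := A) n (Y A s (n + (m + n * K + 2)))
    rw [← hK] at hr
    rw [show n + (m + n * K + 2) = n + (m + n * K + 2 - r) + r by omega, Tpow_Y] at hrt
    have := hD n hn s t _ (by omega) hrt
    subst this
    exact ⟨_, by omega, by omega, hrt⟩
  have step : ∀ n ≥ N, 1 ≤ n → ∀ l, 0 < l → rel A n (Y A s (n + l)) (Y A s n) →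
      (∀ i, 0 < i → i < l → ¬ rel A n (Y A s (n + i)) (Y A s n)) →
      rel A (n+1) (Y A s (n + 1 + l)) (Y A s (n+1)) := by
    intro n hn hn1 l hl hrel hmin
    have e0 : (2 * K + 4) * n = 2 * (n * K) + 4 * n := by ring
    have hlb : l ≤ n * K + 2 := by
      obtain ⟨l', h1, h2, h3⟩ := ret n hn 0 (by omega)
      by_contra hc
      exact hmin l' h1 (by omega) h3
    have hex : ∃ l', l < l' ∧ l' ≤ l + n * K + 2 ∧ rel A n (Y A s (n + l')) (Y A s n) :=
      ret n hn l (by omega)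
    classical
    obtain ⟨hf1, hf2, hf3⟩ := Nat.find_spec hex
    have hfmin : ∀ i, l < i → i < Nat.find hex → ¬ rel A n (Y A s (n + i)) (Y A s n) :=
      fun i h1 h2 h3 => Nat.find_min hex h2 ⟨h1, by omega, h3⟩
    set L := Nat.find hex
    have hns1 : ∀ j, 0 < j → j < l → ∀ t, ¬ rel A n ((A.T ^ j) (Y A s (n + l))) (Y A t n) := by
      intro j h1 h2 t h3
      rw [show n + l = n + (l - j) + j by omega, Tpow_Y] at h3
      have := hD n hn s t _ (by omega) h3
      subst this
      exact hmin _ (by omega) (by omega) h3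
    have hns2 : ∀ j, 0 < j → j < L - l → ∀ t, ¬ rel A n ((A.T ^ j) (Y A s (n + L))) (Y A t n) := by
      intro j h1 h2 t h3
      rw [show n + L = n + (L - j) + j by omega, Tpow_Y] at h3
      have := hD n hn s t _ (by omega) h3
      subst this
      exact hfmin _ (by omega) (by omega) h3
    have ru : (A.T ^ l) (Y A s (n + l)) = Y A s n := Tpow_Y s n l
    have rv : (A.T ^ (L - l)) (Y A s (n + L)) = Y A s (n + l) := by
      rw [show n + L = n + l + (L - l) by omega, Tpow_Y]
    by_cases huv : rel A (n+1) (Y A s (n + l)) (Y A s (n + L))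
    · have hLl : L - l = l := by
        rcases lt_trichotomy (L - l) l with h | h | h
        · exfalso
          have := par huv hns1 (L - l) (by omega) h.le
          rw [rv] at this
          exact hns1 (L - l) (by omega) h s (this.trans hrel)
        · exact h
        · exfalso
          have := par huv.symm hns2 l hl h.le
          rw [ru] at this
          exact hns2 l hl h s this
      have h1 : rel A n (Y A s (n + 1)) (Y A s (n + 1 + l)) := by
        rcases Nat.lt_or_ge 1 l with hl1 | hl1
        · have := par huv hns1 (l - 1) (by omega) (by omega)
          rwa [show n + l = n + 1 + (l - 1) by omega, Tpow_Y,
            show n + L = n + 1 + l + (l - 1) by omega, Tpow_Y] at this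
        · have : l = 1 := by omega
          have hL : L = 2 := by omega
          rw [hL, this] at huv
          rw [this]
          exact huv.mono (by omega)
      apply rel_succ_of
      · intro s'
        simpa using (h1 0 (by omega) s').symm
      · rw [show n + 1 + l = n + l + 1 by omega, T_Y, T_Y]
        exact hrel
    · exfalso
      have h0 : ∀ t, rel A n (Y A s n) (Y A t n) → s = t := fun t h =>
        hD n hn s t 0 (by omega) h
      apply no_trap (A := A) (n := n) (s := s) (t := t0) (fun h => hst (h0 _ h))
      intro z hz
      have hor : rel A (n+1) (Y A s (n + l)) z ∨ rel A (n+1) (Y A s (n + L)) z := by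
        by_contra hc
        push Not at hc
        have a1 := separated h0 hrel hz hc.1
        have a2 := separated h0 hf3 hz hc.2
        have a3 := separated h0 hrel hf3 huv
        rcases a1 with a1 | a1 <;> rcases a2 with a2 | a2 <;> rcases a3 with a3 | a3 <;>
          first
          | exact absurd a1.1 (not_lt.2 a2.2)
          | exact absurd a1.1 (not_lt.2 a3.2)
          | exact absurd a2.1 (not_lt.2 a1.2)
          | exact absurd a2.1 (not_lt.2 a3.2)
          | exact absurd a3.1 (not_lt.2 a1.2)
          | exact absurd a3.1 (not_lt.2 a2.2)
      rcases hor with h | h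
      · refine ⟨l, hl, ?_, ?_⟩
        · have := par h hns1 l hl le_rfl
          rw [ru] at this
          exact this.symm
        · intro j h1 h2 h3
          exact hns1 j h1 h2 t0 ((par h hns1 j h1 h2.le).trans h3)
      · refine ⟨L - l, by omega, ?_, ?_⟩
        · have := par h hns2 (L - l) (by omega) le_rfl
          rw [rv] at this
          exact this.symm.trans hrel
        · intro j h1 h2 h3
          exact hns2 j h1 h2 t0 ((par h hns2 j h1 h2.le).trans h3)
  -- the return time is constant
  have hex : ∃ l, 0 < l ∧ rel A (N+1) (Y A s (N + 1 + l)) (Y A s (N+1)) := by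
    have e0 : (2 * K + 4) * (N+1) = 2 * ((N+1) * K) + 4 * (N+1) := by ring
    obtain ⟨l, h1, _, h2⟩ := ret (N+1) (by omega) 0 (by omega)
    exact ⟨l, h1, h2⟩
  classical
  obtain ⟨hl, hl2⟩ := Nat.find_spec hex
  have hlm : ∀ i, 0 < i → i < Nat.find hex → ¬ rel A (N+1) (Y A s (N + 1 + i)) (Y A s (N+1)) :=
    fun i h1 h2 h3 => Nat.find_min hex h2 ⟨h1, h3⟩
  set l := Nat.find hex
  have all : ∀ d, rel A (N+1+d) (Y A s (N+1+d + l)) (Y A s (N+1+d)) ∧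
      ∀ i, 0 < i → i < l → ¬ rel A (N+1+d) (Y A s (N + 1 + d + i)) (Y A s (N+1+d)) := by
    intro d
    induction d with
    | zero => exact ⟨hl2, hlm⟩
    | succ d ih =>
      refine ⟨step (N+1+d) (by omega) (by omega) l hl ih.1 ih.2, ?_⟩
      intro i h1 h2 h3
      apply ih.2 i h1 h2
      have := rel.step (n := N+1+d) h3
      rwa [show N + 1 + (d + 1) + i = N + 1 + d + i + 1 by omega,
        show N + 1 + (d + 1) = N + 1 + d + 1 by omega, T_Y, T_Y] at this
  have hfix : Y A s l = Y A s 0 := by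
    apply Subtype.ext
    apply arith (lam := lam) (g := fun n => ((Y A s n : Set.Ico (0:ℝ) lam) : ℝ)) (q := l)
      (fun n => (Y A s n).2)
    intro n
    have h1 := (all n).1.shift (N + 1) (by omega)
    have h2 := (all n).1.shift N (by omega)
    rw [show N + 1 + n + l = n + l + (N + 1) by omega,
      show N + 1 + n = n + (N + 1) by omega, Tpow_Y, Tpow_Y] at h1
    rw [show N + 1 + n + l = n + 1 + l + N by omega,
      show N + 1 + n = n + 1 + N by omega, Tpow_Y, Tpow_Y,
      show n + 1 + l + N = n + l + (N + 1) by omega,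
      show n + 1 + N = n + (N + 1) by omega] at h2
    linarith
  apply not_periodic (A := A) (x := Y A s 0) hl
  conv_lhs => rw [← hfix]
  simpa using Tpow_Y (A := A) s 0 l

lemma small (s : S) (hs : (0:ℝ) < A.b s) (δ : ℝ) (hδ : 0 < δ) :
    ∃ N, ∀ n ≥ N, ∀ x y, rel A n x y → |(x:ℝ) - y| < δ := by
  obtain ⟨η, hη, hη1, hη2⟩ : ∃ η : ℝ, 0 < η ∧ 2 * η ≤ δ ∧ η ≤ A.b s :=
    ⟨min (δ/2) (A.b s), lt_min (by linarith) hs,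
      by linarith [min_le_left (δ/2) (A.b s : ℝ)], min_le_right _ _⟩
  have h1 : ∀ i : ℕ, ∃ n, ∀ x y : Set.Ico (0:ℝ) lam, (x:ℝ) = i * η → (y:ℝ) = i * η + η →
      ¬ rel A n x y := by
    intro i
    by_cases hi : i * η + η < lam
    · let g : Set.Ico (0:ℝ) lam := ⟨i * η, by positivity, by linarith⟩
      let u : Set.Ico (0:ℝ) lam := ⟨A.b s - η, by linarith, by linarith [(A.b s).2.2]⟩
      obtain ⟨t, ht1, ht2⟩ := A.mn g u (A.b s) (by
        rw [← Subtype.coe_lt_coe]; simp only [u]; linarith)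
      refine ⟨t+1, ?_⟩
      intro x y hx hy hr
      have : x = g := Subtype.ext hx
      subst this
      have e := (hr.mono (Nat.le_succ t)).shift t le_rfl
      have h3 := hr t (by omega) s
      rw [← Subtype.coe_lt_coe] at ht1 ht2
      rw [← Subtype.coe_le_coe, ← Subtype.coe_le_coe] at h3
      have hu : (u:ℝ) = A.b s - η := rfl
      have := h3.2 (by linarith)
      linarith
    · exact ⟨0, fun x y _ hy => by have := y.2.2; exact absurd (hy ▸ this) hi⟩
  choose n hn using h1
  obtain ⟨M, hM⟩ := exists_nat_gt (lam / η)
  rw [div_lt_iff₀ hη] at hM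
  refine ⟨(Finset.range (M+1)).sup n, ?_⟩
  have key : ∀ m ≥ (Finset.range (M+1)).sup n, ∀ x y : Set.Ico (0:ℝ) lam, rel A m x y →
      x ≤ y → (y:ℝ) - x < δ := by
    intro m hm x y hr hxy
    by_contra hc
    push Not at hc
    obtain ⟨i, hi1, hi2⟩ : ∃ i : ℕ, (x:ℝ) ≤ i * η ∧ i * η < x + η := by
      refine ⟨⌈(x:ℝ)/η⌉₊, ?_, ?_⟩
      · rw [← div_le_iff₀ hη]; exact Nat.le_ceil _
      · have := Nat.ceil_lt_add_one (div_nonneg x.2.1 hη.le)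
        calc _ < ((x:ℝ)/η + 1) * η := by gcongr
          _ = x + η := by field_simp
    have hiM : i < M + 1 := by
      have h2 : (i:ℝ) * η < M * η := by linarith [y.2.2]
      have : (i:ℝ) < M := lt_of_mul_lt_mul_right h2 hη.le
      have : i < M := by exact_mod_cast this
      omega
    have hni : n i ≤ m := (Finset.le_sup (f := n) (Finset.mem_range.2 hiM)).trans hm
    let g : Set.Ico (0:ℝ) lam := ⟨i * η, by positivity, by linarith [y.2.2]⟩
    let g' : Set.Ico (0:ℝ) lam := ⟨i * η + η, by positivity, by linarith [y.2.2]⟩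
    have r1 : rel A m x g := hr.conv (by rw [← Subtype.coe_le_coe]; exact hi1)
      (by rw [← Subtype.coe_le_coe]; simp only [g]; linarith)
    have r2 : rel A m x g' := hr.conv (by rw [← Subtype.coe_le_coe]; simp only [g']; linarith)
      (by rw [← Subtype.coe_le_coe]; simp only [g']; linarith)
    exact hn i g g' rfl rfl ((r1.symm.trans r2).mono hni)
  intro m hm x y hr
  rcases le_total x y with h | h
  · rw [abs_sub_comm, abs_of_nonneg (sub_nonneg.2 (Subtype.coe_le_coe.2 h))]
    exact key m hm x y hr h
  · rw [abs_of_nonneg (sub_nonneg.2 (Subtype.coe_le_coe.2 h))]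
    exact key m hm y x hr.symm h

section avg
set_option linter.unusedSectionVars false
variable {E : Type} [NormedAddCommGroup E] [NormedSpace ℝ E]

/-- `s n / n → a` -/
def App (s : ℕ → E) (a : E) : Prop := ∀ ε : ℝ, 0 < ε → ∀ᶠ n : ℕ in atTop, ‖s n - (n:ℝ) • a‖ ≤ ε * n

lemma App.window {s : ℕ → E} {a : E} (h : App s a) (D : ℕ) (ε : ℝ) (hε : 0 < ε) :
    ∀ᶠ n : ℕ in atTop, ∀ r ≤ D * n, ‖s (r + n) - s r - (n:ℝ) • a‖ ≤ ε * n := by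
  set η := ε / (2 * (2 * D + 1)) with hη
  have hη0 : 0 < η := by positivity
  obtain ⟨M, hM⟩ := eventually_atTop.1 (h η hη0)
  obtain ⟨K, hK0, hK⟩ : ∃ K : ℝ, 0 ≤ K ∧ ∀ n, ‖s n - (n:ℝ) • a‖ ≤ η * n + K := by
    refine ⟨∑ n ∈ Finset.range M, ‖s n - (n:ℝ) • a‖, Finset.sum_nonneg fun _ _ => norm_nonneg _, ?_⟩
    intro n
    have h0 : 0 ≤ ∑ n ∈ Finset.range M, ‖s n - (n:ℝ) • a‖ := Finset.sum_nonneg fun _ _ => norm_nonneg _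
    rcases Nat.lt_or_ge n M with hn | hn
    · have := Finset.single_le_sum (f := fun n : ℕ => ‖s n - (n:ℝ) • a‖)
        (fun _ _ => norm_nonneg _) (Finset.mem_range.2 hn)
      have h2 : 0 ≤ η * n := by positivity
      linarith
    · linarith [hM n hn]
  obtain ⟨N, hN⟩ := exists_nat_gt (4 * K / ε)
  rw [div_lt_iff₀ hε] at hN
  filter_upwards [eventually_ge_atTop N] with n hn r hr
  have e : s (r + n) - s r - (n:ℝ) • a = (s (r+n) - ((r+n:ℕ):ℝ) • a) - (s r - (r:ℝ) • a) := by
    push_cast; rw [add_smul]; abel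
  rw [e]
  refine (norm_sub_le _ _).trans ?_
  have h1 := hK (r+n)
  have h2 := hK r
  have h3 : (r:ℝ) ≤ D * n := by exact_mod_cast hr
  have h4 : (N:ℝ) ≤ n := by exact_mod_cast hn
  push_cast at h1
  have h5 : η * r ≤ η * (D * n) := by gcongr
  have h6 : η * (2 * D + 1) = ε / 2 := by rw [hη]; field_simp
  have h7 : ε * N ≤ ε * n := by gcongr
  have h8 : η * (2 * D + 1) * n = ε / 2 * n := by rw [h6]
  push_cast
  nlinarith

def F (A : Sys lam S) (f : Set.Ico (0:ℝ) lam → E) (n : ℕ) (x : Set.Ico (0:ℝ) lam) : E :=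
  ∑ t ∈ Finset.range n, f ((A.T ^ t) x)

lemma F_add (f : Set.Ico (0:ℝ) lam → E) (n r : ℕ) (x) :
    F A f (r + n) x = F A f r x + F A f n ((A.T ^ r) x) := by
  unfold F
  rw [Finset.sum_range_add]
  congr 1
  apply Finset.sum_congr rfl
  intro t _
  rw [← Equiv.Perm.mul_apply, ← pow_add, add_comm t r]

lemma F_close (s : S) (hs : (0:ℝ) < A.b s) (f : Set.Ico (0:ℝ) lam → E)
    (hf : UniformContinuous f) (ε : ℝ) (hε : 0 < ε) :
    ∀ᶠ n : ℕ in atTop, ∀ x y, rel A n x y → ‖F A f n x - F A f n y‖ ≤ ε * n := by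
  obtain ⟨δ, hδ, hd⟩ := Metric.uniformContinuous_iff.1 hf ε hε
  obtain ⟨N, hN⟩ := small s hs δ hδ
  filter_upwards [eventually_ge_atTop N] with n hn x y hr
  unfold F
  rw [← Finset.sum_sub_distrib]
  refine (norm_sum_le_of_le (f := fun t => f ((A.T ^ t) x) - f ((A.T ^ t) y))
    (n := fun _ => ε) _ ?_).trans (by simp [mul_comm])
  intro t ht
  have h1 := hr.shift t (Finset.mem_range.1 ht).le
  have h2 := hN n hn x y hr
  rw [← dist_eq_norm]
  apply (hd _).le
  rw [Subtype.dist_eq, Real.dist_eq, abs_sub_comm, h1, abs_sub_comm]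
  exact h2

lemma final [Fintype S] [Nontrivial S] (hb : ∀ s, (0:ℝ) < A.b s)
    (f : Set.Ico (0:ℝ) lam → E) (hf : UniformContinuous f) (M : ℝ) (hM : ∀ x, ‖f x‖ ≤ M)
    (a : S → E) (ha : Function.Injective a) (x : S → Set.Ico (0:ℝ) lam)
    (hx : ∀ i, App (fun n => F A f n (x i)) (a i)) : False := by
  classical
  set K := Fintype.card S with hK
  obtain ⟨s0⟩ : Nonempty S := inferInstance
  -- gap
  obtain ⟨g, hg, hgap⟩ : ∃ g : ℝ, 0 < g ∧ ∀ i j, ‖a i - a j‖ < g → i = j := by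
    obtain ⟨g, hg, h⟩ : ∃ g : ℝ, 0 < g ∧ ∀ p ∈ (Finset.univ : Finset (S × S)).filter (fun p : S × S => p.1 ≠ p.2),
        g ≤ ‖a p.1 - a p.2‖ := by
      have hne : ((Finset.univ : Finset (S × S)).filter (fun p : S × S => p.1 ≠ p.2)).Nonempty := by
        obtain ⟨i, j, hij⟩ := exists_pair_ne S
        exact ⟨(i, j), by simpa using hij⟩
      obtain ⟨p, hp, hmin⟩ := Finset.exists_min_image _ (fun p : S × S => ‖a p.1 - a p.2‖) hne
      refine ⟨‖a p.1 - a p.2‖, ?_, hmin⟩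
      rw [norm_pos_iff, sub_ne_zero]
      exact fun h => (Finset.mem_filter.1 hp).2 (ha h)
    refine ⟨g, hg, fun i j hij => ?_⟩
    by_contra hne
    exact absurd hij (not_lt.2 (h (i, j) (by simpa using hne)))
  -- two approximations at the same place
  have two : ∀ n : ℕ, 1 ≤ n → ∀ (v : E) i j, ‖v - (n:ℝ) • a i‖ ≤ g / 4 * n →
      ‖v - (n:ℝ) • a j‖ ≤ g / 2 * n → i = j := by
    intro n hn v i j h1 h2
    apply hgap
    have hn' : (1:ℝ) ≤ n := by exact_mod_cast hn
    have e : (n:ℝ) • (a i - a j) = (v - (n:ℝ) • a j) - (v - (n:ℝ) • a i) := by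
      rw [smul_sub]; abel
    have h3 : (n:ℝ) * ‖a i - a j‖ ≤ g / 2 * n + g / 4 * n := by
      calc (n:ℝ) * ‖a i - a j‖ = ‖(n:ℝ) • (a i - a j)‖ := by rw [norm_smul]; simp
        _ ≤ _ := by rw [e]; exact (norm_sub_le _ _).trans (by linarith)
    by_contra hc
    push Not at hc
    nlinarith
  have H : ∀ ε : ℝ, 0 < ε → ∀ᶠ n : ℕ in atTop, ∀ i, ∃ s, ‖F A f n (Y A s n) - (n:ℝ) • a i‖ ≤ ε * n := by
    intro ε hε
    have w : ∀ᶠ n : ℕ in atTop, ∀ i, ∀ r ≤ (K + 1) * n,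
        ‖F A f (r + n) (x i) - F A f r (x i) - (n:ℝ) • a i‖ ≤ (ε/2) * n :=
      eventually_all.2 fun i => (hx i).window (K+1) (ε/2) (by linarith)
    filter_upwards [w, F_close s0 (hb s0) f hf (ε/2) (by linarith), eventually_ge_atTop 1] with n h1 h2 hn i
    obtain ⟨r, hr, s, hs⟩ := exists_special (A := A) n (x i)
    rw [← hK] at hr
    have h3 := h1 i r (by
      have : (K + 1) * n = n * K + n := by ring
      omega)
    have h4 := h2 _ _ hs
    rw [F_add, add_sub_cancel_left] at h3
    refine ⟨s, ?_⟩
    have e : F A f n (Y A s n) - (n:ℝ) • a i = (F A f n ((A.T ^ r) (x i)) - (n:ℝ) • a i)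
      - (F A f n ((A.T ^ r) (x i)) - F A f n (Y A s n)) := by abel
    rw [e]
    exact (norm_sub_le _ _).trans (by linarith)
  have Qsucc : ∀ s n, F A f (n+1) (Y A s (n+1)) = f (Y A s (n+1)) + F A f n (Y A s n) := by
    intro s n
    have := F_add (A := A) f n 1 (Y A s (n+1))
    rw [add_comm 1 n] at this
    rw [this, pow_one, T_Y]
    simp [F]
  have hM0 : 0 ≤ M := (norm_nonneg _).trans (hM (x s0))
  -- consistent assignment
  obtain ⟨N, hN⟩ := eventually_atTop.1 (H (g/4) (by linarith))
  obtain ⟨N', hN'⟩ := exists_nat_gt ((M + ∑ i, ‖a i‖ + g / 4) * 4 / g)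
  rw [div_lt_iff₀ hg] at hN'
  set N1 := max (max N N') 1 with hN1
  have surj : ∀ n ≥ N1, ∀ s, ∃ i, ‖F A f n (Y A s n) - (n:ℝ) • a i‖ ≤ g/4 * n := by
    intro n hn
    choose τ hτ using hN n (by omega)
    have hinj : Function.Injective τ := by
      intro i j hij
      refine two n (by omega) _ i j (hτ i) ?_
      rw [hij]
      refine (hτ j).trans ?_
      gcongr; linarith
    intro s
    obtain ⟨i, rfl⟩ := (Finite.injective_iff_surjective.1 hinj) s
    exact ⟨i, hτ i⟩
  choose σ hσ using surj N1 le_rfl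
  have cons : ∀ n ≥ N1, ∀ s, ‖F A f n (Y A s n) - (n:ℝ) • a (σ s)‖ ≤ g/4 * n := by
    intro n hn
    induction n, hn using Nat.le_induction with
    | base => exact hσ
    | succ n hn ih =>
      intro s
      obtain ⟨j, hj⟩ := surj (n+1) (by omega) s
      have hji : σ s = j := by
        refine two n (by omega) _ _ _ (ih s) ?_
        rw [Qsucc] at hj
        have e : F A f n (Y A s n) - (n:ℝ) • a j = (f (Y A s (n+1)) + F A f n (Y A s n) - ((n+1:ℕ):ℝ) • a j)
          - f (Y A s (n+1)) + a j := by
          push_cast; rw [add_smul, one_smul]; abel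
        rw [e]
        refine (norm_add_le _ _).trans ((add_le_add_left (norm_sub_le _ _) _).trans ?_)
        have h1 := hM (Y A s (n+1))
        have h2 : ‖a j‖ ≤ ∑ i, ‖a i‖ := Finset.single_le_sum (f := fun i => ‖a i‖)
          (fun _ _ => norm_nonneg _) (Finset.mem_univ j)
        have h3 : (N':ℝ) ≤ n := by
          have : N' ≤ n := by omega
          exact_mod_cast this
        have h4 : (N':ℝ) * g ≤ n * g := by gcongr
        push_cast at hj ⊢
        linarith
      rw [hji]; exact hj
  have σsurj : Function.Surjective σ := by
    intro i
    obtain ⟨s, hs⟩ := hN N1 (by omega) i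
    exact ⟨s, two N1 (by omega) _ _ _ (cons N1 le_rfl s) (hs.trans (by gcongr; linarith))⟩
  have σinj : Function.Injective σ := Finite.injective_iff_surjective.2 σsurj
  have App' : ∀ s, App (fun n => F A f n (Y A s n)) (a (σ s)) := by
    intro s ε hε
    filter_upwards [H (min ε (g/4)) (lt_min hε (by linarith)), eventually_ge_atTop N1] with n h1 hn
    obtain ⟨s', hs'⟩ := h1 (σ s)
    have : s' = s := by
      apply σinj
      refine two n (by omega) _ _ _ (cons n hn s') (hs'.trans ?_)
      gcongr
      exact (min_le_right _ _).trans (by linarith)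
    subst this
    refine hs'.trans ?_
    gcongr
    exact min_le_left _ _
  have w : ∀ᶠ n : ℕ in atTop, ∀ s, ∀ r ≤ (2 * K + 4) * n,
        ‖F A f (r + n) (Y A s (r + n)) - F A f r (Y A s r) - (n:ℝ) • a (σ s)‖ ≤ (g/8) * n :=
      eventually_all.2 fun s => (App' s).window (2 * K + 4) (g/8) (by linarith)
  obtain ⟨N2, hN2⟩ := eventually_atTop.1
    ((w.and (F_close s0 (hb s0) f hf (g/8) (by linarith))).and (eventually_ge_atTop N1))
  apply core (A := A) N2
  intro n hn s t r hr hrel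
  obtain ⟨⟨h1, h2⟩, h3⟩ := hN2 n hn
  have h4 := h1 s r (by rwa [hK])
  have h5 := h2 _ _ hrel
  apply σinj
  symm
  refine two n (by omega) _ _ _ (cons n h3 t) ?_
  have e1 : F A f (r + n) (Y A s (r + n)) = F A f n (Y A s (n + r)) + F A f r (Y A s r) := by
    have := F_add (A := A) f r n (Y A s (r + n))
    rw [Tpow_Y] at this
    rw [add_comm n r] at this ⊢
    exact this
  rw [e1, add_sub_cancel_right] at h4
  have e : F A f n (Y A t n) - (n:ℝ) • a (σ s) = (F A f n (Y A s (n+r)) - (n:ℝ) • a (σ s))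
      - (F A f n (Y A s (n+r)) - F A f n (Y A t n)) := by abel
  rw [e]
  refine (norm_sub_le _ _).trans ?_
  have : (0:ℝ) ≤ g * n := by positivity
  linarith

end avg

def bpt (k : ℕ) (sep : Fin (k + 1) → ℝ) (s : Fin (k-1)) : ℝ := sep ⟨s + 1, by omega⟩

lemma bpt_pos {k : ℕ} {lam : ℝ} {sep : Fin (k + 1) → ℝ} {T : ℝ → ℝ}
    (hT : IsIET k lam sep T) (s : Fin (k-1)) : 0 < bpt k sep s := by
  rw [← hT.sep_zero]
  exact hT.sep_mono (by rw [Fin.lt_def]; simp)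

lemma bpt_lt {k : ℕ} {lam : ℝ} {sep : Fin (k + 1) → ℝ} {T : ℝ → ℝ}
    (hT : IsIET k lam sep T) (s : Fin (k-1)) : bpt k sep s < lam := by
  rw [← hT.sep_last]
  exact hT.sep_mono (by rw [Fin.lt_def]; simp; omega)

lemma iet_tr {k : ℕ} {lam : ℝ} {sep : Fin (k + 1) → ℝ} {T : ℝ → ℝ}
    (hT : IsIET k lam sep T) (x y : Set.Ico (0:ℝ) lam)
    (h : ∀ s, bpt k sep s ≤ x ↔ bpt k sep s ≤ y) : T y - T x = y - x := by
  have hall : ∀ j, sep j ≤ x ↔ sep j ≤ y := by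
    intro j
    by_cases h0 : j = 0
    · subst h0
      rw [hT.sep_zero]
      exact ⟨fun _ => y.2.1, fun _ => x.2.1⟩
    by_cases h1 : j = Fin.last k
    · subst h1
      rw [hT.sep_last]
      exact ⟨fun q => absurd x.2.2 (not_lt.2 q), fun q => absurd y.2.2 (not_lt.2 q)⟩
    · have a0 : (j:ℕ) ≠ 0 := fun q => h0 (Fin.ext q)
      have a1 : (j:ℕ) ≠ k := fun q => h1 (Fin.ext q)
      have := h ⟨j - 1, by omega⟩
      unfold bpt at this
      have e : (⟨(j:ℕ) - 1 + 1, by omega⟩ : Fin (k+1)) = j := Fin.ext (by simp; omega)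
      simpa only [e] using this
  classical
  obtain ⟨i, hi, hmax⟩ := Finset.exists_max_image
    (Finset.univ.filter (fun j : Fin (k+1) => sep j ≤ x)) id
    ⟨0, by simp only [Finset.mem_filter, Finset.mem_univ, true_and, hT.sep_zero]; exact x.2.1⟩
  simp only [Finset.mem_filter, Finset.mem_univ, true_and, id] at hi hmax
  have hil : i ≠ Fin.last k := by
    rintro rfl
    rw [hT.sep_last] at hi
    exact absurd x.2.2 (not_lt.2 hi)
  obtain ⟨i', rfl⟩ := Fin.exists_castSucc_eq.2 hil
  have hs : ¬ sep i'.succ ≤ x := fun q =>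
    absurd (hmax _ q) (not_le.2 Fin.castSucc_lt_succ)
  obtain ⟨c, hc⟩ := hT.translation i'
  rw [hc x ⟨hi, not_le.1 hs⟩, hc y ⟨(hall _).1 hi, not_le.1 (fun q => hs ((hall _).2 q))⟩]
  ring

lemma equiv_pow {lam : ℝ} {T : ℝ → ℝ} (h : Set.BijOn T (Set.Ico 0 lam) (Set.Ico 0 lam))
    (n : ℕ) (z : Set.Ico (0:ℝ) lam) :
    ((((h.equiv T : Equiv.Perm (Set.Ico (0:ℝ) lam)) ^ n) z : Set.Ico (0:ℝ) lam) : ℝ) = T^[n] z := by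
  induction n generalizing z with
  | zero => simp
  | succ n ih =>
    rw [pow_succ, Equiv.Perm.mul_apply, ih, Function.iterate_succ_apply]
    rfl

noncomputable def sys {k : ℕ} {lam : ℝ} {sep : Fin (k + 1) → ℝ} {T : ℝ → ℝ}
    (hT : IsIET k lam sep T) (hmin : IETMinimal lam T) : Sys lam (Fin (k-1)) where
  T := hT.bijOn.equiv T
  b s := ⟨bpt k sep s, (bpt_pos hT s).le, bpt_lt hT s⟩
  tr x y h := iet_tr hT x y h
  mn x u v huv := by
    have huv' : (u:ℝ) < v := huv
    have hmem : ((u:ℝ) + v) / 2 ∈ Set.Ico (0:ℝ) lam := by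
      have := u.2.1; have := v.2.2; constructor <;> linarith
    have hc := hmin x x.2 hmem
    obtain ⟨_, ⟨h1, h2⟩, n, rfl⟩ := mem_closure_iff.1 hc (Set.Ioo (u:ℝ) v) isOpen_Ioo
      ⟨by linarith, by linarith⟩
    refine ⟨n, ?_, ?_⟩
    · rw [← Subtype.coe_lt_coe, equiv_pow]; exact h1
    · rw [← Subtype.coe_lt_coe, equiv_pow]; exact h2

lemma sys_pow {k : ℕ} {lam : ℝ} {sep : Fin (k + 1) → ℝ} {T : ℝ → ℝ}
    (hT : IsIET k lam sep T) (hmin : IETMinimal lam T) (n : ℕ) (z : Set.Ico (0:ℝ) lam) :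
    ((((sys hT hmin).T ^ n) z : Set.Ico (0:ℝ) lam) : ℝ) = T^[n] z :=
  equiv_pow hT.bijOn n z

end IETAux

/-- For `k > 2`, a minimal `k`-IET has at most `k - 2` distinct generic measures
(i.e. there is no family of `k - 1` distinct ones). -/
theorem iet_at_most_k_sub_two_generic_measures
    (k : ℕ) (hk : 2 < k) (lam : ℝ) (sep : Fin (k + 1) → ℝ) (T : ℝ → ℝ)
    (hT : IsIET k lam sep T) (hmin : IETMinimal lam T) :
    ¬ ∃ μ : Fin (k - 1) → Measure ℝ, Function.Injective μ ∧
        ∀ i, IETGenericMeasure lam T (μ i) := by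
  rintro ⟨μ, hμinj, hμ⟩
  let E := (Fin (k-1) × Fin (k-1)) → ℝ
  have hsep : ∀ p : Fin (k-1) × Fin (k-1), ∃ f : ℝ → ℝ, Continuous f ∧
      (p.1 ≠ p.2 → ∫ y, f y ∂(μ p.1) ≠ ∫ y, f y ∂(μ p.2)) := by
    rintro ⟨i, j⟩
    by_cases hij : i = j
    · exact ⟨fun _ => 0, continuous_const, fun h => absurd hij h⟩
    · have := (hμ i).1
      have := (hμ j).1
      by_contra hc
      push Not at hc
      apply hij
      apply hμinj
      apply ext_of_forall_integral_eq_of_IsFiniteMeasure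
      intro f
      exact (hc f f.continuous).2
  choose G hG hG2 using hsep
  let f0 : ℝ → E := fun y p => G p y
  have hf0 : Continuous f0 := continuous_pi fun p => hG p
  let a : Fin (k-1) → E := fun i p => ∫ y, G p y ∂(μ i)
  have ha : Function.Injective a := by
    intro i j hij
    by_contra hne
    exact hG2 (i, j) hne (congrFun hij (i, j))
  choose hprob hmass x hx hgen using hμ
  have : Nontrivial (Fin (k-1)) := Fin.nontrivial_iff_two_le.2 (by omega)
  let A := IETAux.sys hT hmin
  have hApow : ∀ (n : ℕ) (z : Set.Ico (0:ℝ) lam), (((A.T ^ n) z : Set.Ico (0:ℝ) lam) : ℝ) = T^[n] z :=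
    IETAux.sys_pow hT hmin
  have hcomp : UniformContinuousOn f0 (Set.Icc 0 lam) :=
    isCompact_Icc.uniformContinuousOn_of_continuous hf0.continuousOn
  obtain ⟨M, hM⟩ := isCompact_Icc.exists_bound_of_continuousOn (s := Set.Icc (0:ℝ) lam) hf0.continuousOn
  refine IETAux.final (A := A) (E := E) ?_ (fun z => f0 z) ?_ M
    (fun z => hM _ (Set.Ico_subset_Icc_self z.2)) a ha (fun i => ⟨x i, hx i⟩) ?_
  · intro s
    exact IETAux.bpt_pos hT s
  · exact uniformContinuousOn_iff_restrict.1 (hcomp.mono Set.Ico_subset_Icc_self)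
  · intro i ε hε
    have ht : Tendsto (fun N : ℕ => (N:ℝ)⁻¹ • ∑ n ∈ Finset.range N, f0 (T^[n] (x i))) atTop (nhds (a i)) := by
      rw [tendsto_pi_nhds]
      intro p
      refine (hgen i (G p) (hG p)).congr ?_
      intro N
      have e2 : (∑ n ∈ Finset.range N, f0 (T^[n] (x i))) p = ∑ n ∈ Finset.range N, G p (T^[n] (x i)) :=
        Finset.sum_apply p (Finset.range N) (fun n => f0 (T^[n] (x i)))
      change _ = (N:ℝ)⁻¹ * (∑ n ∈ Finset.range N, f0 (T^[n] (x i))) p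
      rw [e2, div_eq_inv_mul]
    filter_upwards [(Metric.tendsto_nhds.1 ht) ε hε, eventually_ge_atTop 1] with n hn hn1
    have hn0 : (0:ℝ) < n := by exact_mod_cast hn1
    rw [dist_eq_norm] at hn
    have e : IETAux.F A (fun z => f0 z) n ⟨x i, hx i⟩ - (n:ℝ) • a i
        = (n:ℝ) • ((n:ℝ)⁻¹ • ∑ m ∈ Finset.range n, f0 (T^[m] (x i)) - a i) := by
      rw [smul_sub, smul_inv_smul₀ hn0.ne']
      congr 1
      unfold IETAux.F
      apply Finset.sum_congr rfl
      intro t _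
      simp only [hApow]
    change ‖IETAux.F A (fun z => f0 z) n ⟨x i, hx i⟩ - (n:ℝ) • a i‖ ≤ ε * n
    rw [e, norm_smul, Real.norm_of_nonneg hn0.le, mul_comm]
    gcongr
end
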